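/- arXiv:1203.1294 — 3 statements merged into one kernel-verified Lean document; each statement's English description precedes it below -/
import Mathlib

section
/- Let R be a commutative Noetherian local ring with residue field k, and let X be a resolving subcategory of mod R which is closed under tensor products and closed under transposes. If X contains a nonfree R-module, then k belongs to X. -/
/-!
Write `Tor₁ M L` for the kernel of `K ⊗ L → F ⊗ L`, where `0 → K → F → M → 0` is exact with `F`
finitely generated free. Since `𝒳` is resolving and closed under tensor products, it is closed
under `Tor₁` (`IsResolving.tor_mem`). Let `stableAnn R M` be the ideal of those `a` such that
`a : M → M` factors through a free module. It kills `Tor₁ M L` and `Tor₁ L M` for every `L`.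

For `b ∈ 𝔪` the pushout `ExtMod` of `K → F` along `b : K → K` is an extension of `M` by `K`, so it
lies in `𝒳` with `M`; it has `b` in its `stableAnn` (`mem_stableAnn_extMod`), it contains there the
squares of the elements of `stableAnn R M` (`sq_mem_stableAnn_extension`), and for a minimal cover
it is nonfree if `M` is (`free_of_extMod_free`). Running through generators of `𝔪` gives a nonfree
module in `𝒳` whose `stableAnn` contains a power of `𝔪` (`exists_nonfree_radical`).

Now let `L ∈ 𝒳` be nonfree with `𝔪 ^ N ≤ stableAnn R L`, and let `b ∈ 𝔪`. The module
`Tor₁ (tr L) L` is the stable endomorphism ring of `L`, so it is nonzero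
(`id_mem_freeMaps_of_transpose`). It is killed by `𝔪 ^ N`, so it has a nonzero element killed by
`b`. By the snake lemma (`rTensor_injective_of_snake`) such an element makes `Tor₁ E L` nonzero,
where `E` is the `ExtMod` of `tr L` along `b`. This `Tor₁ E L` lies in `𝒳` and is killed by `b` and
by everything in `stableAnn R L`, in particular by everything that kills `L`. Repeating this for
generators of `𝔪` yields a nonzero module in `𝒳` killed by `𝔪`, and `k` is a direct summand of it.
-/

open TensorProduct

noncomputable section

/-- The nonfree locus of a module: primes where the localization is a nonfree module. -/
def nonfreeLocus (R : Type) [CommRing R] (M : Type) [AddCommGroup M] [Module R M] :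
    Set (PrimeSpectrum R) :=
  {p | ¬ Module.Free (Localization.AtPrime p.asIdeal) (LocalizedModule p.asIdeal.primeCompl M)}

/-- The nonfree locus of a subcategory of `mod R`. -/
def catNonfreeLocus (R : Type) [CommRing R] (𝒳 : Set (ModuleCat.{0} R)) :
    Set (PrimeSpectrum R) :=
  ⋃ M ∈ 𝒳, nonfreeLocus R M

/-- A resolving subcategory of the category of finitely generated `R`-modules:
closed under isomorphism, consisting of finitely generated modules, containing `R`,
closed under direct summands, extensions and kernels of epimorphisms. -/
structure IsResolving (R : Type) [CommRing R] (𝒳 : Set (ModuleCat.{0} R)) : Prop where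
  fg : ∀ M ∈ 𝒳, Module.Finite R M
  mem_of_iso : ∀ M N : ModuleCat.{0} R, Nonempty (M ≃ₗ[R] N) → M ∈ 𝒳 → N ∈ 𝒳
  ring_mem : ModuleCat.of R R ∈ 𝒳
  summand_mem : ∀ M N : ModuleCat.{0} R,
    (∃ (i : N →ₗ[R] M) (p : M →ₗ[R] N), p ∘ₗ i = LinearMap.id) → M ∈ 𝒳 → N ∈ 𝒳
  extension_mem : ∀ (L M N : ModuleCat.{0} R) (f : L →ₗ[R] M) (g : M →ₗ[R] N),
    Function.Injective f → Function.Surjective g → Function.Exact f g →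
      L ∈ 𝒳 → N ∈ 𝒳 → M ∈ 𝒳
  ker_epi_mem : ∀ (L M N : ModuleCat.{0} R) (f : L →ₗ[R] M) (g : M →ₗ[R] N),
    Function.Injective f → Function.Surjective g → Function.Exact f g →
      M ∈ 𝒳 → N ∈ 𝒳 → L ∈ 𝒳

/-- Membership in the additive closure `add 𝒴` of a subcategory `𝒴` of `mod S`:
direct summands of finite direct sums of modules in `𝒴`. -/
def memAdd (S : Type) [CommRing S] (𝒴 : Set (ModuleCat.{0} S)) (N : Type)
    [AddCommGroup N] [Module S N] : Prop :=
  ∃ (n : ℕ) (Y : Fin n → ModuleCat.{0} S), (∀ i, Y i ∈ 𝒴) ∧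
    ∃ (s : N →ₗ[S] ((i : Fin n) → Y i)) (r : ((i : Fin n) → Y i) →ₗ[S] N),
      r ∘ₗ s = LinearMap.id

/-- The subcategory `𝒳_p` of `mod R_p` consisting of localizations of modules in `𝒳`. -/
def locCat (R : Type) [CommRing R] (𝒳 : Set (ModuleCat.{0} R)) (p : PrimeSpectrum R) :
    Set (ModuleCat.{0} (Localization.AtPrime p.asIdeal)) :=
  {N | ∃ X ∈ 𝒳, Nonempty
    (N ≃ₗ[Localization.AtPrime p.asIdeal] LocalizedModule p.asIdeal.primeCompl X)}

/-- `κ(p) ∈ add_{R_p} 𝒳_p`. -/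
def kappaMemAdd (R : Type) [CommRing R] (𝒳 : Set (ModuleCat.{0} R)) (p : PrimeSpectrum R) :
    Prop :=
  memAdd (Localization.AtPrime p.asIdeal) (locCat R 𝒳 p)
    (IsLocalRing.ResidueField (Localization.AtPrime p.asIdeal))

/-- A specialization-closed subset of `Spec R`. -/
def SpecClosed (R : Type) [CommRing R] (Φ : Set (PrimeSpectrum R)) : Prop :=
  ∀ p ∈ Φ, ∀ q : PrimeSpectrum R, p.asIdeal ≤ q.asIdeal → q ∈ Φ

/-- `s(R)`: the set of primes `p` such that `R_p` is not a field. -/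
def nonFieldLocus (R : Type) [CommRing R] : Set (PrimeSpectrum R) :=
  {p | ¬ IsField (Localization.AtPrime p.asIdeal)}

/-- A (Noetherian) local ring is regular iff its maximal ideal is generated by
`dim` many elements. -/
def IsRegularLoc (A : Type) [CommRing A] [IsLocalRing A] : Prop :=
  ∃ (n : ℕ) (x : Fin n → A), ringKrullDim A = (n : ℕ) ∧
    Ideal.span (Set.range x) = IsLocalRing.maximalIdeal A

/-- The singular locus of `R`. -/
def singLocus (R : Type) [CommRing R] : Set (PrimeSpectrum R) :=
  {p | ¬ IsRegularLoc (Localization.AtPrime p.asIdeal)}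

/-- `V^{-1}(Φ)`: finitely generated modules whose nonfree locus is contained in `Φ`. -/
def Vinv (R : Type) [CommRing R] (Φ : Set (PrimeSpectrum R)) : Set (ModuleCat.{0} R) :=
  {M | Module.Finite R M ∧ nonfreeLocus R M ⊆ Φ}

/-- The depth of a module: supremum of lengths of regular sequences in the maximal ideal. -/
def seqDepth (R : Type) [CommRing R] [IsLocalRing R] (M : Type) [AddCommGroup M]
    [Module R M] : ℕ∞ :=
  sSup {n : ℕ∞ | ∃ rs : List R, (rs.length : ℕ∞) = n ∧
    (∀ r ∈ rs, r ∈ IsLocalRing.maximalIdeal R) ∧ RingTheory.Sequence.IsRegular M rs}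

/-- A local ring is Cohen–Macaulay if its depth equals its Krull dimension. -/
def IsCMLocalRing (R : Type) [CommRing R] [IsLocalRing R] : Prop :=
  (seqDepth R R : WithBot ℕ∞) = ringKrullDim R

/-- A module over a local ring is Cohen–Macaulay ("maximal Cohen–Macaulay") if its depth
equals the Krull dimension of the ring. -/
def IsCMModule (R : Type) [CommRing R] [IsLocalRing R] (M : Type) [AddCommGroup M]
    [Module R M] : Prop :=
  (seqDepth R M : WithBot ℕ∞) = ringKrullDim R

/-- The subcategory `CM(R)` of `mod R` of (maximal) Cohen–Macaulay modules. -/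
def CMcat (R : Type) [CommRing R] [IsLocalRing R] : Set (ModuleCat.{0} R) :=
  {M | Module.Finite R M ∧ IsCMModule R M}

/-- `V_CM^{-1}(Φ)`: Cohen–Macaulay modules whose nonfree locus is contained in `Φ`. -/
def VinvCM (R : Type) [CommRing R] [IsLocalRing R] (Φ : Set (PrimeSpectrum R)) :
    Set (ModuleCat.{0} R) :=
  {M | Module.Finite R M ∧ IsCMModule R M ∧ nonfreeLocus R M ⊆ Φ}

/-- `IsSyzygyOf R n M S` : `S` is an `n`-th syzygy of `M` in a minimal free resolution,
i.e. `S ≅ Ω^n M`. -/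
def IsSyzygyOf (R : Type) [CommRing R] [IsLocalRing R] :
    ℕ → ModuleCat.{0} R → ModuleCat.{0} R → Prop
  | 0, M, S => Nonempty (S ≃ₗ[R] M)
  | n + 1, M, S => ∃ (m : ℕ) (π : (Fin m → R) →ₗ[R] M), Function.Surjective π ∧
      LinearMap.ker π ≤ (IsLocalRing.maximalIdeal R) • (⊤ : Submodule R (Fin m → R)) ∧
      IsSyzygyOf R n (ModuleCat.of R (LinearMap.ker π)) S

/-- `IsTransposeOf R X M T` : `T` is (isomorphic to) the transpose `tr_X M` of `M`
with respect to `X`, computed from a minimal free presentation of `M`. -/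
def IsTransposeOf (R : Type) [CommRing R] [IsLocalRing R] (X : Type) [AddCommGroup X]
    [Module R X] (M : Type) [AddCommGroup M] [Module R M] (T : Type) [AddCommGroup T]
    [Module R T] : Prop :=
  ∃ (n m : ℕ) (dl : (Fin n → R) →ₗ[R] (Fin m → R)) (π : (Fin m → R) →ₗ[R] M),
    Function.Surjective π ∧ Function.Exact dl π ∧
    LinearMap.ker π ≤ (IsLocalRing.maximalIdeal R) • (⊤ : Submodule R (Fin m → R)) ∧
    LinearMap.ker dl ≤ (IsLocalRing.maximalIdeal R) • (⊤ : Submodule R (Fin n → R)) ∧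
    Nonempty (T ≃ₗ[R]
      (((Fin n → R) →ₗ[R] X) ⧸ LinearMap.range (LinearMap.lcomp R X dl)))

/-- `𝒳` is closed under tensor products. -/
def ClosedUnderTensor (R : Type) [CommRing R] (𝒳 : Set (ModuleCat.{0} R)) : Prop :=
  ∀ X ∈ 𝒳, ∀ Y ∈ 𝒳, ModuleCat.of R (TensorProduct R X Y) ∈ 𝒳

/-- `𝒳` is closed under (Auslander) transposes. -/
def ClosedUnderTranspose (R : Type) [CommRing R] [IsLocalRing R]
    (𝒳 : Set (ModuleCat.{0} R)) : Prop :=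
  ∀ M ∈ 𝒳, ∀ T : ModuleCat.{0} R, IsTransposeOf R R M T → T ∈ 𝒳


/-- The subcategory `add R` of direct summands of finitely generated free modules. -/
def addRCat (R : Type) [CommRing R] : Set (ModuleCat.{0} R) :=
  {M | ∃ (n : ℕ) (i : M →ₗ[R] (Fin n → R)) (p : (Fin n → R) →ₗ[R] M),
    p ∘ₗ i = LinearMap.id}

/-- A thick subcategory of `CM(R)`: closed under isomorphisms and direct summands, and
satisfying two-out-of-three for short exact sequences of Cohen-Macaulay modules. -/
structure IsThickCM (R : Type) [CommRing R] [IsLocalRing R]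
    (𝒳 : Set (ModuleCat.{0} R)) : Prop where
  subset_cm : 𝒳 ⊆ CMcat R
  mem_of_iso : ∀ M N : ModuleCat.{0} R, Nonempty (M ≃ₗ[R] N) → M ∈ 𝒳 → N ∈ 𝒳
  summand_mem : ∀ M N : ModuleCat.{0} R,
    (∃ (i : N →ₗ[R] M) (p : M →ₗ[R] N), p ∘ₗ i = LinearMap.id) → M ∈ 𝒳 → N ∈ 𝒳
  two_of_three : ∀ (L M N : ModuleCat.{0} R), L ∈ CMcat R → M ∈ CMcat R → N ∈ CMcat R →
    ∀ (f : L →ₗ[R] M) (g : M →ₗ[R] N),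
      Function.Injective f → Function.Surjective g → Function.Exact f g →
        ((L ∈ 𝒳 → M ∈ 𝒳 → N ∈ 𝒳) ∧ (L ∈ 𝒳 → N ∈ 𝒳 → M ∈ 𝒳) ∧ (M ∈ 𝒳 → N ∈ 𝒳 → L ∈ 𝒳))

/-- A local ring with infinite residue field has minimal multiplicity iff the square of the
maximal ideal equals `Q * m` for a parameter ideal `Q = (x_1, …, x_d)` generated by
`d = dim` many elements of `m`. -/
def HasMinimalMultiplicity (A : Type) [CommRing A] [IsLocalRing A] : Prop :=
  ∃ (n : ℕ) (x : Fin n → A), ringKrullDim A = (n : ℕ) ∧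
    (∀ i, x i ∈ IsLocalRing.maximalIdeal A) ∧
    (IsLocalRing.maximalIdeal A) ^ 2 =
      Ideal.span (Set.range x) * IsLocalRing.maximalIdeal A

/-! ### Maps factoring through free modules -/

section Factoring

variable {R : Type} [CommRing R] {M N P K F : Type}
  [AddCommGroup M] [Module R M] [AddCommGroup N] [Module R N] [AddCommGroup P] [Module R P]
  [AddCommGroup K] [Module R K] [AddCommGroup F] [Module R F]

/-- The linear maps `M → N` that factor through a finitely generated free module, as the span of
the rank-one maps `x ↦ q x • y`. -/
def freeMaps (R : Type) [CommRing R] (M N : Type) [AddCommGroup M] [Module R M]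
    [AddCommGroup N] [Module R N] : Submodule R (M →ₗ[R] N) :=
  Submodule.span R (Set.range fun p : (M →ₗ[R] R) × N => p.1.smulRight p.2)

lemma smulRight_mem_freeMaps (q : M →ₗ[R] R) (y : N) : q.smulRight y ∈ freeMaps R M N :=
  Submodule.subset_span ⟨(q, y), rfl⟩

lemma comp_mem_freeMaps_left (g : N →ₗ[R] P) {f : M →ₗ[R] N} (hf : f ∈ freeMaps R M N) :
    g ∘ₗ f ∈ freeMaps R M P := by
  induction hf using Submodule.span_induction with
  | mem f hf =>
    obtain ⟨⟨q, y⟩, rfl⟩ := hf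
    have : g ∘ₗ q.smulRight y = q.smulRight (g y) := by ext; simp
    simpa only [this] using smulRight_mem_freeMaps q (g y)
  | zero => simp
  | add f₁ f₂ _ _ h₁ h₂ => rw [LinearMap.comp_add]; exact add_mem h₁ h₂
  | smul a f _ h => rw [LinearMap.comp_smul]; exact Submodule.smul_mem _ _ h

lemma comp_mem_freeMaps_right (g : P →ₗ[R] M) {f : M →ₗ[R] N} (hf : f ∈ freeMaps R M N) :
    f ∘ₗ g ∈ freeMaps R P N := by
  induction hf using Submodule.span_induction with
  | mem f hf =>
    obtain ⟨⟨q, y⟩, rfl⟩ := hf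
    have : q.smulRight y ∘ₗ g = (q ∘ₗ g).smulRight y := by ext; simp
    simpa only [this] using smulRight_mem_freeMaps (q ∘ₗ g) y
  | zero => simp
  | add f₁ f₂ _ _ h₁ h₂ => rw [LinearMap.add_comp]; exact add_mem h₁ h₂
  | smul a f _ h => rw [LinearMap.smul_comp]; exact Submodule.smul_mem _ _ h

lemma mem_freeMaps_of_free [Module.Free R F] [Module.Finite R F] (h : F →ₗ[R] N) :
    h ∈ freeMaps R F N := by
  classical
  let b := Module.Free.chooseBasis R F
  have : h = ∑ j, (b.coord j).smulRight (h (b j)) := by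
    refine b.ext fun i => ?_
    simp [LinearMap.sum_apply, Finsupp.single_apply]
  rw [this]
  exact Submodule.sum_mem _ fun j _ => smulRight_mem_freeMaps _ _

lemma exists_lift_of_mem_freeMaps {π : P →ₗ[R] N} (hπ : Function.Surjective π)
    {f : M →ₗ[R] N} (hf : f ∈ freeMaps R M N) :
    ∃ g ∈ freeMaps R M P, π ∘ₗ g = f := by
  induction hf using Submodule.span_induction with
  | mem f hf =>
    obtain ⟨⟨q, y⟩, rfl⟩ := hf
    obtain ⟨z, rfl⟩ := hπ y
    exact ⟨q.smulRight z, smulRight_mem_freeMaps _ _, by ext; simp⟩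
  | zero => exact ⟨0, zero_mem _, by simp⟩
  | add f₁ f₂ _ _ h₁ h₂ =>
    obtain ⟨g₁, hg₁, rfl⟩ := h₁
    obtain ⟨g₂, hg₂, rfl⟩ := h₂
    exact ⟨g₁ + g₂, add_mem hg₁ hg₂, by rw [LinearMap.comp_add]⟩
  | smul a f _ h =>
    obtain ⟨g, hg, rfl⟩ := h
    exact ⟨a • g, Submodule.smul_mem _ _ hg, by rw [LinearMap.comp_smul]⟩

/-- The ideal of those `a` for which multiplication by `a` on `M` factors through a finitely
generated free module; equivalently, the annihilator of the stable endomorphism ring of `M`. -/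
def stableAnn (R : Type) [CommRing R] (M : Type) [AddCommGroup M] [Module R M] : Ideal R :=
  (freeMaps R M M).comap (LinearMap.toSpanSingleton R (M →ₗ[R] M) LinearMap.id)

lemma mem_stableAnn {a : R} : a ∈ stableAnn R M ↔ a • LinearMap.id ∈ freeMaps R M M :=
  Iff.rfl

lemma mem_stableAnn_of_smul_eq_zero {a : R} (h : ∀ x : M, a • x = 0) : a ∈ stableAnn R M := by
  have : a • (LinearMap.id : M →ₗ[R] M) = 0 := by ext x; simpa using h x
  rw [mem_stableAnn, this]
  exact zero_mem _

lemma exists_factor_of_exact {i : K →ₗ[R] F} {π : F →ₗ[R] M} (hi : Function.Injective i)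
    (hex : Function.Exact i π) (h : N →ₗ[R] F) (hh : π ∘ₗ h = 0) :
    ∃ h' : N →ₗ[R] K, i ∘ₗ h' = h := by
  have hr : ∀ x, h x ∈ LinearMap.range i := fun x => (hex (h x)).1 (LinearMap.congr_fun hh x)
  refine ⟨(LinearEquiv.ofInjective i hi).symm.toLinearMap ∘ₗ h.codRestrict _ hr, ?_⟩
  ext x
  exact congrArg Subtype.val
    ((LinearEquiv.ofInjective i hi).apply_symm_apply (h.codRestrict _ hr x))

/-- If multiplication by `a` on `M` factors through a free module, then on a syzygy `K` of `M`
it extends along the inclusion of `K` in the free module `F`. -/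
lemma exists_homotopy {i : K →ₗ[R] F} {π : F →ₗ[R] M} (hi : Function.Injective i)
    (hπ : Function.Surjective π) (hex : Function.Exact i π) {a : R} (ha : a ∈ stableAnn R M) :
    ∃ h : F →ₗ[R] K, h ∘ₗ i = a • LinearMap.id := by
  obtain ⟨g, -, hg⟩ := exists_lift_of_mem_freeMaps hπ (mem_stableAnn.1 ha)
  obtain ⟨h, hh⟩ := exists_factor_of_exact hi hex (a • LinearMap.id - g ∘ₗ π) (by
    rw [LinearMap.comp_sub, ← LinearMap.comp_assoc, hg]
    ext x; simp)
  refine ⟨h, ?_⟩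
  ext x
  apply hi
  have h1 := LinearMap.congr_fun hh (i x)
  have h2 : π (i x) = 0 := hex.apply_apply_eq_zero x
  simpa [h2] using h1

lemma mem_stableAnn_syzygy [Module.Free R F] [Module.Finite R F]
    {i : K →ₗ[R] F} {π : F →ₗ[R] M} (hi : Function.Injective i)
    (hπ : Function.Surjective π) (hex : Function.Exact i π) {a : R} (ha : a ∈ stableAnn R M) :
    a ∈ stableAnn R K := by
  obtain ⟨h, hh⟩ := exists_homotopy hi hπ hex ha
  rw [mem_stableAnn, ← hh]
  exact comp_mem_freeMaps_right i (mem_freeMaps_of_free h)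

lemma sq_mem_stableAnn_extension {i : K →ₗ[R] P} {π : P →ₗ[R] M} (hi : Function.Injective i)
    (hπ : Function.Surjective π) (hex : Function.Exact i π) {a : R} (ha : a ∈ stableAnn R M)
    (ha' : a ∈ stableAnn R K) : a ^ 2 ∈ stableAnn R P := by
  obtain ⟨g, hgm, hg⟩ := exists_lift_of_mem_freeMaps hπ (mem_stableAnn.1 ha)
  obtain ⟨h, hh⟩ := exists_factor_of_exact hi hex (a • LinearMap.id - g ∘ₗ π) (by
    rw [LinearMap.comp_sub, ← LinearMap.comp_assoc, hg]
    ext x; simp)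
  have key : a ^ 2 • (LinearMap.id : P →ₗ[R] P)
      = a • (g ∘ₗ π) + i ∘ₗ ((a • LinearMap.id) ∘ₗ h) := by
    ext x
    have h1 := LinearMap.congr_fun hh x
    simp only [LinearMap.comp_apply, LinearMap.sub_apply, LinearMap.smul_apply,
      LinearMap.id_apply] at h1
    simp [h1, smul_sub, pow_two, mul_smul]
  rw [mem_stableAnn, key]
  exact add_mem (Submodule.smul_mem _ _ (comp_mem_freeMaps_right π hgm))
    (comp_mem_freeMaps_left i (comp_mem_freeMaps_right h (mem_stableAnn.1 ha')))

lemma projective_of_one_mem [Module.Free R F] {π : F →ₗ[R] M} (hπ : Function.Surjective π)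
    (h : LinearMap.id ∈ freeMaps R M M) : Module.Projective R M := by
  obtain ⟨g, -, hg⟩ := exists_lift_of_mem_freeMaps hπ h
  exact Module.Projective.of_split g π hg

end Factoring

/-! ### The kernel of `K ⊗ L → F ⊗ L` -/

section Tor

variable {R : Type} [CommRing R] {M K F L : Type}
  [AddCommGroup M] [Module R M] [AddCommGroup K] [Module R K] [AddCommGroup F] [Module R F]
  [AddCommGroup L] [Module R L]

lemma lTensor_eq_zero_of_mem_freeMaps {i : K →ₗ[R] F} (hi : Function.Injective i)
    {t : K ⊗[R] L} (ht : i.rTensor L t = 0) {f : L →ₗ[R] L} (hf : f ∈ freeMaps R L L) :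
    f.lTensor K t = 0 := by
  induction hf using Submodule.span_induction with
  | mem f hf =>
    obtain ⟨⟨q, y⟩, rfl⟩ := hf
    have hq : q.lTensor K t = 0 := by
      apply Module.Flat.rTensor_preserves_injective_linearMap (M := R) i hi
      rw [map_zero, ← LinearMap.comp_apply, LinearMap.rTensor_comp_lTensor,
        ← LinearMap.lTensor_comp_rTensor, LinearMap.comp_apply, ht, map_zero]
    have : q.smulRight y = (LinearMap.toSpanSingleton R L y) ∘ₗ q := by ext; simp
    simp only [this]
    rw [LinearMap.lTensor_comp, LinearMap.comp_apply, hq, map_zero]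
  | zero => simp
  | add f₁ f₂ _ _ h₁ h₂ => simp [LinearMap.lTensor_add, h₁, h₂]
  | smul a f _ h => simp [LinearMap.lTensor_smul, h]

/-- `stableAnn R L` kills `Tor₁ M L = ker (K ⊗ L → F ⊗ L)`. -/
lemma smul_eq_zero_of_mem_right {i : K →ₗ[R] F} (hi : Function.Injective i)
    {t : K ⊗[R] L} (ht : i.rTensor L t = 0) {a : R} (ha : a ∈ stableAnn R L) : a • t = 0 := by
  simpa [LinearMap.lTensor_smul] using lTensor_eq_zero_of_mem_freeMaps hi ht (mem_stableAnn.1 ha)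

/-- `stableAnn R M` kills `Tor₁ M L = ker (K ⊗ L → F ⊗ L)`. -/
lemma smul_eq_zero_of_mem_left {i : K →ₗ[R] F} {π : F →ₗ[R] M} (hi : Function.Injective i)
    (hπ : Function.Surjective π) (hex : Function.Exact i π)
    {t : K ⊗[R] L} (ht : i.rTensor L t = 0) {a : R} (ha : a ∈ stableAnn R M) : a • t = 0 := by
  obtain ⟨h, hh⟩ := exists_homotopy hi hπ hex ha
  have : (h ∘ₗ i).rTensor L t = 0 := by
    rw [LinearMap.rTensor_comp, LinearMap.comp_apply, ht, map_zero]
  simpa [hh, LinearMap.rTensor_smul] using this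

/-- The part of the snake lemma expressing that `Tor₁ E L`, computed from a flat cover of `L`,
surjects onto the kernel of `A ⊗ L → B ⊗ L`. -/
lemma rTensor_injective_of_snake {A B E Ω P : Type} [AddCommGroup A] [Module R A]
    [AddCommGroup B] [Module R B] [AddCommGroup E] [Module R E] [AddCommGroup Ω] [Module R Ω]
    [AddCommGroup P] [Module R P] [Module.Flat R P]
    {f : A →ₗ[R] B} {g : B →ₗ[R] E} {j : Ω →ₗ[R] P} {p : P →ₗ[R] L}
    (hf : Function.Injective f) (hg : Function.Surjective g) (hfg : Function.Exact f g)
    (hp : Function.Surjective p) (hjp : Function.Exact j p)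
    (H : ∀ z : Ω ⊗[R] E, j.rTensor E z = 0 → z = 0) {t : A ⊗[R] L} (ht : f.rTensor L t = 0) :
    t = 0 := by
  obtain ⟨u, rfl⟩ := LinearMap.lTensor_surjective A hp t
  have h1 : p.lTensor B (f.rTensor P u) = 0 := by
    rw [← ht, ← LinearMap.comp_apply, ← LinearMap.comp_apply, LinearMap.lTensor_comp_rTensor,
      LinearMap.rTensor_comp_lTensor]
  obtain ⟨v, hv⟩ := (lTensor_exact B hjp hp _).1 h1
  have h2 : j.lTensor E (g.rTensor Ω v) = 0 := by
    have : j.lTensor E (g.rTensor Ω v) = g.rTensor P (j.lTensor B v) := by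
      rw [← LinearMap.comp_apply, ← LinearMap.comp_apply, LinearMap.lTensor_comp_rTensor,
        LinearMap.rTensor_comp_lTensor]
    rw [this, hv]
    exact (rTensor_exact P hfg hg).apply_apply_eq_zero u
  have h3 : g.rTensor Ω v = 0 := by
    apply (TensorProduct.comm R E Ω).injective
    rw [map_zero]
    apply H
    rw [← LinearMap.comm_comp_lTensor_comp_comm_eq]
    simp [h2]
  obtain ⟨w, rfl⟩ := (rTensor_exact Ω hfg hg _).1 h3
  have h4 : f.rTensor P (j.lTensor A w) = f.rTensor P u := by
    rw [← hv, ← LinearMap.comp_apply, ← LinearMap.comp_apply, LinearMap.lTensor_comp_rTensor,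
      LinearMap.rTensor_comp_lTensor]
  rw [← Module.Flat.rTensor_preserves_injective_linearMap f hf h4]
  exact (lTensor_exact A hjp hp).apply_apply_eq_zero w

lemma dualTensorHom_lcomp {F' : Type} [AddCommGroup F'] [Module R F'] (d : F →ₗ[R] F')
    (z : Module.Dual R F' ⊗[R] L) :
    dualTensorHom R F L ((LinearMap.lcomp R R d).rTensor L z) = dualTensorHom R F' L z ∘ₗ d := by
  induction z with
  | zero => simp
  | add x y hx hy => rw [map_add, map_add, hx, hy, map_add, LinearMap.add_comp]
  | tmul q y =>
    refine LinearMap.ext fun x => ?_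
    rw [LinearMap.rTensor_tmul, LinearMap.comp_apply, dualTensorHom_apply]
    exact dualTensorHom_apply _ _ _

lemma exists_dualTensorHom_eq {m : ℕ} (π : (Fin m → R) →ₗ[R] L) :
    ∃ e : Module.Dual R (Fin m → R) ⊗[R] L, dualTensorHom R (Fin m → R) L e = π :=
  (dualTensorHomEquiv R (Fin m → R) L).surjective π

lemma exists_comp_eq_of_ker_le {N : Type} [AddCommGroup N] [Module R N] {π : F →ₗ[R] L}
    (hπ : Function.Surjective π) {q : F →ₗ[R] N} (hq : LinearMap.ker π ≤ LinearMap.ker q) :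
    ∃ q' : L →ₗ[R] N, q' ∘ₗ π = q := by
  refine ⟨(LinearMap.ker π).liftQ q hq ∘ₗ
    (π.quotKerEquivOfSurjective hπ).symm.toLinearMap, LinearMap.ext fun x => ?_⟩
  rw [LinearMap.comp_apply, LinearMap.comp_apply,
    ← LinearMap.quotKerEquivOfSurjective_apply_mk π hπ]
  simp

/-- An element of `F* ⊗ L` built from functionals vanishing on `ker π` gives a map `F → L` that
descends along `π` to an endomorphism of `L` factoring through a free module. -/
lemma exists_freeMaps_of_ker {π : F →ₗ[R] L} (hπ : Function.Surjective π)
    (W : Submodule R (Module.Dual R F)) (hW : ∀ q ∈ W, LinearMap.ker π ≤ LinearMap.ker q)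
    (z : W ⊗[R] L) :
    ∃ g ∈ freeMaps R L L, g ∘ₗ π = dualTensorHom R F L (W.subtype.rTensor L z) := by
  induction z with
  | zero => exact ⟨0, zero_mem _, by simp⟩
  | add x y hx hy =>
    obtain ⟨g₁, hg₁, h₁⟩ := hx
    obtain ⟨g₂, hg₂, h₂⟩ := hy
    exact ⟨g₁ + g₂, add_mem hg₁ hg₂, by rw [map_add, map_add, ← h₁, ← h₂, LinearMap.add_comp]⟩
  | tmul q y =>
    obtain ⟨q, hq⟩ := q
    obtain ⟨q', hq'⟩ := exists_comp_eq_of_ker_le hπ (hW q hq)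
    refine ⟨q'.smulRight y, smulRight_mem_freeMaps _ _, LinearMap.ext fun x => ?_⟩
    rw [LinearMap.rTensor_tmul, dualTensorHom_apply]
    simp [← hq']

lemma exists_ker_rTensor_eq (φ : K →ₗ[R] F)
    (H : ∀ t : LinearMap.range φ ⊗[R] L, (LinearMap.range φ).subtype.rTensor L t = 0 → t = 0)
    {e : K ⊗[R] L} (he : φ.rTensor L e = 0) :
    ∃ z : LinearMap.ker φ ⊗[R] L, (LinearMap.ker φ).subtype.rTensor L z = e := by
  have h2 : φ.rangeRestrict.rTensor L e = 0 := by
    apply H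
    rw [← he, ← LinearMap.comp_apply, ← LinearMap.rTensor_comp]
    rfl
  have hex : Function.Exact (LinearMap.ker φ).subtype φ.rangeRestrict := by
    have := LinearMap.exact_subtype_ker_map φ.rangeRestrict
    rwa [LinearMap.ker_rangeRestrict] at this
  exact (rTensor_exact L hex (LinearMap.surjective_rangeRestrict _) e).1 h2

/-- `Tor₁ (tr L) L` is the stable endomorphism ring of `L`; if it vanishes, the identity of `L`
factors through a free module. The class of the identity is represented by the element of
`F₀* ⊗ L` corresponding to `π : F₀ → L`. -/
lemma id_mem_freeMaps_of_transpose {n m : ℕ} {dl : (Fin n → R) →ₗ[R] (Fin m → R)}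
    {π : (Fin m → R) →ₗ[R] L} (hπ : Function.Surjective π) (hex : Function.Exact dl π)
    (H : ∀ t : LinearMap.range (LinearMap.lcomp R R dl) ⊗[R] L,
      (LinearMap.range (LinearMap.lcomp R R dl)).subtype.rTensor L t = 0 → t = 0) :
    LinearMap.id ∈ freeMaps R L L := by
  obtain ⟨e, he⟩ := exists_dualTensorHom_eq π
  have h1 : (LinearMap.lcomp R R dl).rTensor L e = 0 := by
    apply (dualTensorHomEquiv R (Fin n → R) L).injective
    rw [map_zero]
    refine (dualTensorHom_lcomp dl e).trans ?_
    rw [he]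
    exact hex.linearMap_comp_eq_zero
  obtain ⟨z, hz⟩ := exists_ker_rTensor_eq (LinearMap.lcomp R R dl) H h1
  obtain ⟨g, hg, hgπ⟩ := exists_freeMaps_of_ker hπ (LinearMap.ker (LinearMap.lcomp R R dl)) (by
      intro q hq
      have hq' : q ∘ₗ dl = 0 := hq
      rw [hex.linearMap_ker_eq]
      rintro _ ⟨x, rfl⟩
      exact LinearMap.congr_fun hq' x) z
  have : g = LinearMap.id := by
    refine LinearMap.ext fun y => ?_
    obtain ⟨x, rfl⟩ := hπ y
    exact LinearMap.congr_fun (hgπ.trans ((congrArg _ hz).trans he)) x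
  exact this ▸ hg

end Tor

/-! ### The extension obtained by multiplying a syzygy sequence by a ring element -/

section Ext

variable {R : Type} [CommRing R] {M K F : Type}
  [AddCommGroup M] [Module R M] [AddCommGroup K] [Module R K] [AddCommGroup F] [Module R F]

/-- The map `K → F × K`, `x ↦ (i x, -b x)`. -/
abbrev extMap (i : K →ₗ[R] F) (b : R) : K →ₗ[R] F × K := i.prod (-(b • LinearMap.id))

/-- The pushout of `i : K → F` along multiplication by `b` on `K`. When `0 → K → F → M → 0` is
exact, it is an extension of `M` by `K` whose class is `b` times that of `F`. -/
abbrev ExtMod (i : K →ₗ[R] F) (b : R) : Type := (F × K) ⧸ LinearMap.range (extMap i b)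

lemma extMap_injective {i : K →ₗ[R] F} (hi : Function.Injective i) (b : R) :
    Function.Injective (extMap i b) := fun _ _ h => hi (congrArg Prod.fst h)

lemma extMap_exact (i : K →ₗ[R] F) (b : R) :
    Function.Exact (extMap i b) (LinearMap.range (extMap i b)).mkQ :=
  LinearMap.exact_map_mkQ_range _

lemma exists_extension {i : K →ₗ[R] F} {π : F →ₗ[R] M} (hi : Function.Injective i)
    (hπ : Function.Surjective π) (hex : Function.Exact i π) (b : R) :
    ∃ (f : K →ₗ[R] ExtMod i b) (g : ExtMod i b →ₗ[R] M),
      Function.Injective f ∧ Function.Surjective g ∧ Function.Exact f g := by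
  have hle : LinearMap.range (extMap i b) ≤ LinearMap.ker (π ∘ₗ LinearMap.fst R F K) := by
    rintro _ ⟨x, rfl⟩
    exact hex.apply_apply_eq_zero x
  refine ⟨(LinearMap.range (extMap i b)).mkQ ∘ₗ LinearMap.inr R F K,
    (LinearMap.range (extMap i b)).liftQ _ hle, ?_, ?_, ?_⟩
  · rw [← LinearMap.ker_eq_bot, LinearMap.ker_eq_bot']
    intro x hx
    obtain ⟨y, hy⟩ := (Submodule.Quotient.mk_eq_zero _).1 hx
    have h1 : i y = 0 := congrArg Prod.fst hy
    have h2 : y = 0 := hi (h1.trans (map_zero i).symm)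
    have h3 : -(b • y) = x := congrArg Prod.snd hy
    rw [← h3, h2]; simp
  · intro y
    obtain ⟨x, rfl⟩ := hπ y
    exact ⟨Submodule.Quotient.mk (x, 0), rfl⟩
  · intro z
    constructor
    · intro hz
      obtain ⟨⟨x, y⟩, rfl⟩ := Submodule.Quotient.mk_surjective _ z
      obtain ⟨w, rfl⟩ := (hex x).1 hz
      -- `(i w, y)` and `(0, y + b w)` differ by `extMap i b w`
      refine ⟨y + b • w, (Submodule.Quotient.eq _).2 ⟨-w, ?_⟩⟩
      ext <;> simp
    · rintro ⟨y, rfl⟩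
      exact map_zero π

/-- Multiplication by `b` on `ExtMod i b` is the composite `ExtMod i b → F → ExtMod i b` of
`(x, y) ↦ b x + i y` and `x ↦ (x, 0)`. -/
lemma mem_stableAnn_extMod [Module.Free R F] [Module.Finite R F] (i : K →ₗ[R] F) (b : R) :
    b ∈ stableAnn R (ExtMod i b) := by
  have hle : LinearMap.range (extMap i b) ≤
      LinearMap.ker (b • LinearMap.fst R F K + i ∘ₗ LinearMap.snd R F K) := by
    rintro _ ⟨x, rfl⟩
    simp
  let q : ExtMod i b →ₗ[R] F := (LinearMap.range (extMap i b)).liftQ _ hle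
  let p : F →ₗ[R] ExtMod i b := (LinearMap.range (extMap i b)).mkQ ∘ₗ LinearMap.inl R F K
  have : b • LinearMap.id = p ∘ₗ q := by
    refine LinearMap.ext fun z => ?_
    obtain ⟨⟨x, y⟩, rfl⟩ := Submodule.Quotient.mk_surjective _ z
    -- `(b x, b y)` and `(b x + i y, 0)` differ by `extMap i b (-y)`
    change Submodule.Quotient.mk (b • (x, y)) = Submodule.Quotient.mk (b • x + i y, (0 : K))
    refine (Submodule.Quotient.eq _).2 ⟨-y, ?_⟩
    ext <;> simp
  rw [mem_stableAnn, this]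
  exact comp_mem_freeMaps_right q (mem_freeMaps_of_free p)

lemma extMap_rTensor_eq_zero {L : Type} [AddCommGroup L] [Module R L] {i : K →ₗ[R] F} {b : R}
    {t : K ⊗[R] L} (ht : i.rTensor L t = 0) (hb : b • t = 0) : (extMap i b).rTensor L t = 0 := by
  have : extMap i b = LinearMap.inl R F K ∘ₗ i + (-b) • LinearMap.inr R F K := by
    ext <;> simp
  rw [this, LinearMap.rTensor_add, LinearMap.add_apply, LinearMap.rTensor_comp,
    LinearMap.comp_apply, ht, LinearMap.rTensor_smul, LinearMap.smul_apply, ← map_smul, neg_smul,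
    hb]
  simp

lemma free_of_extMod_free [IsLocalRing R] [IsNoetherianRing R] [Module.Free R F]
    [Module.Finite R F] {i : K →ₗ[R] F} {π : F →ₗ[R] M} (hi : Function.Injective i)
    (hπ : Function.Surjective π) (hex : Function.Exact i π)
    (hmin : LinearMap.ker π ≤ IsLocalRing.maximalIdeal R • (⊤ : Submodule R F))
    {b : R} (hb : b ∈ IsLocalRing.maximalIdeal R) (hfree : Module.Free R (ExtMod i b)) :
    Module.Free R M := by
  have : Module.Finite R K := Module.Finite.of_injective i hi
  obtain ⟨s, hs⟩ := Module.projective_lifting_property (LinearMap.range (extMap i b)).mkQ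
    LinearMap.id (Submodule.mkQ_surjective _)
  obtain ⟨r, hr⟩ := exists_factor_of_exact (extMap_injective hi b) (extMap_exact i b)
    (LinearMap.id - s ∘ₗ (LinearMap.range (extMap i b)).mkQ) (by
      rw [LinearMap.comp_sub, ← LinearMap.comp_assoc, hs]; simp)
  have hr' : ∀ x, r (extMap i b x) = x := by
    intro x
    apply extMap_injective hi b
    have h1 := LinearMap.congr_fun hr (extMap i b x)
    have h2 : (LinearMap.range (extMap i b)).mkQ (extMap i b x) = 0 :=
      (extMap_exact i b).apply_apply_eq_zero x
    rw [LinearMap.comp_apply, LinearMap.sub_apply, LinearMap.comp_apply, h2, map_zero, sub_zero]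
      at h1
    exact h1
  -- a retraction of `extMap i b` shows `K = 𝔪 K`, since `i` and `b` are zero modulo `𝔪`
  have hK : (⊤ : Submodule R K) ≤ IsLocalRing.maximalIdeal R • (⊤ : Submodule R K) := by
    intro x _
    have h1 : i x ∈ IsLocalRing.maximalIdeal R • (⊤ : Submodule R F) :=
      hmin (hex.apply_apply_eq_zero x)
    have h2 : (r ∘ₗ LinearMap.inl R F K) (i x) ∈
        IsLocalRing.maximalIdeal R • (⊤ : Submodule R K) := by
      have := Submodule.mem_map_of_mem (f := r ∘ₗ LinearMap.inl R F K) h1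
      rw [Submodule.map_smul''] at this
      exact Submodule.smul_mono le_rfl le_top this
    have h3 : x = (r ∘ₗ LinearMap.inl R F K) (i x) - b • r (0, x) := by
      conv_lhs => rw [← hr' x]
      rw [LinearMap.comp_apply, ← map_smul, ← map_sub]
      congr 1
      ext <;> simp
    rw [h3]
    exact sub_mem h2 (Submodule.smul_mem_smul hb trivial)
  have hbot := Submodule.eq_bot_of_le_smul_of_le_jacobson_bot (IsLocalRing.maximalIdeal R)
    (⊤ : Submodule R K) Module.Finite.fg_top hK (IsLocalRing.maximalIdeal_le_jacobson _)
  have hinj : Function.Injective π := by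
    rw [← LinearMap.ker_eq_bot, LinearMap.ker_eq_bot']
    intro x hx
    obtain ⟨y, rfl⟩ := (hex x).1 hx
    have : y ∈ (⊤ : Submodule R K) := trivial
    rw [hbot, Submodule.mem_bot] at this
    rw [this, map_zero]
  exact Module.Free.of_equiv (LinearEquiv.ofBijective π ⟨hinj, hπ⟩)

end Ext

/-! ### Minimal presentations -/

section Local

variable {R : Type} [CommRing R] [IsLocalRing R]

lemma exists_minimal_cover (M : Type) [AddCommGroup M] [Module R M] [Module.Finite R M] :
    ∃ (n : ℕ) (π : (Fin n → R) →ₗ[R] M), Function.Surjective π ∧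
      LinearMap.ker π ≤ IsLocalRing.maximalIdeal R • (⊤ : Submodule R (Fin n → R)) := by
  classical
  let k := IsLocalRing.ResidueField R
  let w := Module.finBasis k (k ⊗[R] M)
  obtain ⟨v, hv⟩ :=
    (TensorProduct.mk_surjective R M k IsLocalRing.residue_surjective).comp_left w
  have hv' : ∀ i, (1 : k) ⊗ₜ[R] v i = w i := congr_fun hv
  refine ⟨_, Fintype.linearCombination R v, ?_, ?_⟩
  · rw [← LinearMap.range_eq_top, Fintype.range_linearCombination]
    exact IsLocalRing.span_eq_top_of_tmul_eq_basis v w hv'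
  · intro x hx
    have h0 : ∑ i, IsLocalRing.residue R (x i) • w i = 0 := by
      have h1 : (1 : k) ⊗ₜ[R] (∑ i, x i • v i) = 0 := by
        have : ∑ i, x i • v i = 0 := hx
        rw [this, TensorProduct.tmul_zero]
      rw [← h1, TensorProduct.tmul_sum]
      refine Finset.sum_congr rfl fun i _ => ?_
      rw [TensorProduct.tmul_smul, ← hv', ← algebraMap_smul k (x i)]
      rfl
    have h2 : ∀ i, x i ∈ IsLocalRing.maximalIdeal R := fun i =>
      (IsLocalRing.residue_eq_zero_iff _).1
        (Fintype.linearIndependent_iff.1 w.linearIndependent _ h0 i)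
    rw [pi_eq_sum_univ' x]
    exact Submodule.sum_mem _ fun i _ => Submodule.smul_mem_smul (h2 i) trivial

lemma exists_minimal_presentation [IsNoetherianRing R] (M : Type) [AddCommGroup M] [Module R M]
    [Module.Finite R M] :
    ∃ (n m : ℕ) (dl : (Fin n → R) →ₗ[R] (Fin m → R)) (π : (Fin m → R) →ₗ[R] M),
      Function.Surjective π ∧ Function.Exact dl π ∧
      LinearMap.ker π ≤ (IsLocalRing.maximalIdeal R) • (⊤ : Submodule R (Fin m → R)) ∧
      LinearMap.ker dl ≤ (IsLocalRing.maximalIdeal R) • (⊤ : Submodule R (Fin n → R)) := by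
  obtain ⟨m, π, hπ, hmin⟩ := exists_minimal_cover (R := R) M
  obtain ⟨n, ρ, hρ, hmin'⟩ := exists_minimal_cover (R := R) (LinearMap.ker π)
  refine ⟨n, m, (LinearMap.ker π).subtype ∘ₗ ρ, π, hπ, ?_, hmin, ?_⟩
  · rw [LinearMap.exact_iff, LinearMap.range_comp, LinearMap.range_eq_top.2 hρ,
      Submodule.map_top, Submodule.range_subtype]
  · rwa [LinearMap.ker_comp, Submodule.ker_subtype]

/-- A nonzero element on which `b` acts nilpotently has a nonzero multiple killed by `b`. -/
lemma exists_ne_zero_smul_eq_zero {R T : Type} [CommRing R] [AddCommGroup T] [Module R T] {b : R}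
    {N : ℕ} {t : T} (ht : t ≠ 0) (hN : b ^ N • t = 0) : ∃ c : R, c • t ≠ 0 ∧ b • c • t = 0 := by
  induction N with
  | zero => exact absurd (by simpa using hN) ht
  | succ N ih =>
    by_cases h : b ^ N • t = 0
    · exact ih h
    · exact ⟨b ^ N, h, by rw [← hN, pow_succ', mul_smul]⟩

end Local

/-! ### Closure properties of the subcategory -/

section Category

variable {R : Type} [CommRing R] {𝒳 : Set (ModuleCat.{0} R)}

lemma IsResolving.prod_mem (h𝒳 : IsResolving R 𝒳) {A B : Type} [AddCommGroup A] [Module R A]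
    [AddCommGroup B] [Module R B] (hA : ModuleCat.of R A ∈ 𝒳) (hB : ModuleCat.of R B ∈ 𝒳) :
    ModuleCat.of R (A × B) ∈ 𝒳 :=
  h𝒳.extension_mem (ModuleCat.of R A) (ModuleCat.of R (A × B)) (ModuleCat.of R B)
    (LinearMap.inl R A B) (LinearMap.snd R A B) LinearMap.inl_injective
    LinearMap.snd_surjective Function.Exact.inl_snd hA hB

lemma IsResolving.pi_mem (h𝒳 : IsResolving R 𝒳) (n : ℕ) : ModuleCat.of R (Fin n → R) ∈ 𝒳 := by
  induction n with
  | zero =>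
    exact h𝒳.summand_mem (ModuleCat.of R R) (ModuleCat.of R (Fin 0 → R))
      ⟨0, 0, LinearMap.ext fun x => Subsingleton.elim (α := Fin 0 → R) _ _⟩ h𝒳.ring_mem
  | succ n ih =>
    exact h𝒳.mem_of_iso (ModuleCat.of R (R × (Fin n → R))) (ModuleCat.of R (Fin (n + 1) → R))
      ⟨Fin.consLinearEquiv R (fun _ : Fin (n + 1) => R)⟩ (h𝒳.prod_mem h𝒳.ring_mem ih)

lemma IsResolving.free_mem (h𝒳 : IsResolving R 𝒳) (F : Type) [AddCommGroup F] [Module R F]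
    [Module.Free R F] [Module.Finite R F] : ModuleCat.of R F ∈ 𝒳 := by
  let b := Module.Free.chooseBasis R F
  let e := (Fintype.equivFin (Module.Free.ChooseBasisIndex R F))
  exact h𝒳.mem_of_iso (ModuleCat.of R (Fin _ → R)) (ModuleCat.of R F)
    ⟨(b.reindex e).equivFun.symm⟩ (h𝒳.pi_mem _)

variable {M K F L : Type} [AddCommGroup M] [Module R M] [AddCommGroup K] [Module R K]
  [AddCommGroup F] [Module R F] [AddCommGroup L] [Module R L]

lemma IsResolving.syzygy_mem (h𝒳 : IsResolving R 𝒳) [Module.Free R F] [Module.Finite R F]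
    {i : K →ₗ[R] F} {π : F →ₗ[R] M} (hi : Function.Injective i) (hπ : Function.Surjective π)
    (hex : Function.Exact i π) (hM : ModuleCat.of R M ∈ 𝒳) : ModuleCat.of R K ∈ 𝒳 :=
  h𝒳.ker_epi_mem (ModuleCat.of R K) (ModuleCat.of R F) (ModuleCat.of R M) i π hi hπ hex
    (h𝒳.free_mem F) hM

lemma IsResolving.extMod_mem (h𝒳 : IsResolving R 𝒳) [Module.Free R F] [Module.Finite R F]
    {i : K →ₗ[R] F} {π : F →ₗ[R] M} (hi : Function.Injective i) (hπ : Function.Surjective π)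
    (hex : Function.Exact i π) (hM : ModuleCat.of R M ∈ 𝒳) (b : R) :
    ModuleCat.of R (ExtMod i b) ∈ 𝒳 := by
  obtain ⟨f, g, hf, hg, hfg⟩ := exists_extension hi hπ hex b
  exact h𝒳.extension_mem (ModuleCat.of R K) (ModuleCat.of R (ExtMod i b)) (ModuleCat.of R M)
    f g hf hg hfg (h𝒳.syzygy_mem hi hπ hex hM) hM

/-- A tensor-closed resolving subcategory is closed under `Tor₁`: all terms of
`0 → Tor₁ M L → K ⊗ L → F ⊗ L → M ⊗ L → 0` but the first lie in `𝒳`. -/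
lemma IsResolving.tor_mem (h𝒳 : IsResolving R 𝒳) (hten : ClosedUnderTensor R 𝒳)
    [Module.Free R F] [Module.Finite R F]
    {i : K →ₗ[R] F} {π : F →ₗ[R] M} (hi : Function.Injective i) (hπ : Function.Surjective π)
    (hex : Function.Exact i π) (hM : ModuleCat.of R M ∈ 𝒳) (hL : ModuleCat.of R L ∈ 𝒳) :
    ModuleCat.of R (LinearMap.ker (i.rTensor L)) ∈ 𝒳 := by
  have hK := h𝒳.syzygy_mem hi hπ hex hM
  have hKL : ModuleCat.of R (K ⊗[R] L) ∈ 𝒳 := hten _ hK _ hL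
  have hFL : ModuleCat.of R (F ⊗[R] L) ∈ 𝒳 := hten _ (h𝒳.free_mem F) _ hL
  have hML : ModuleCat.of R (M ⊗[R] L) ∈ 𝒳 := hten _ hM _ hL
  have hI : ModuleCat.of R (LinearMap.range (i.rTensor L)) ∈ 𝒳 := by
    refine h𝒳.ker_epi_mem (ModuleCat.of R (LinearMap.range (i.rTensor L)))
      (ModuleCat.of R (F ⊗[R] L)) (ModuleCat.of R (M ⊗[R] L))
      (LinearMap.range (i.rTensor L)).subtype (π.rTensor L) (Submodule.subtype_injective _)
      (LinearMap.rTensor_surjective L hπ) ?_ hFL hML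
    have h := rTensor_exact L hex hπ
    rw [LinearMap.exact_iff] at h ⊢
    rw [h, Submodule.range_subtype]
  refine h𝒳.ker_epi_mem (ModuleCat.of R (LinearMap.ker (i.rTensor L)))
      (ModuleCat.of R (K ⊗[R] L)) (ModuleCat.of R (LinearMap.range (i.rTensor L)))
      (LinearMap.ker (i.rTensor L)).subtype (i.rTensor L).rangeRestrict
      (Submodule.subtype_injective _) (LinearMap.surjective_rangeRestrict _) ?_ hKL hI
  rw [LinearMap.exact_iff, LinearMap.ker_rangeRestrict, Submodule.range_subtype]

end Category

/-! ### Reaching the residue field -/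

section Main

variable {R : Type} [CommRing R] [IsLocalRing R] [IsNoetherianRing R]
  {𝒳 : Set (ModuleCat.{0} R)}

/-- Iterating `ExtMod` produces a nonfree module in `𝒳` on which given elements of `𝔪` are
stably nilpotent. -/
lemma exists_nonfree_radical (h𝒳 : IsResolving R 𝒳) {X : ModuleCat.{0} R} (hX : X ∈ 𝒳)
    (hnf : ¬ Module.Free R X) (s : Finset R) (hs : ∀ a ∈ s, a ∈ IsLocalRing.maximalIdeal R) :
    ∃ M ∈ 𝒳, ¬ Module.Free R M ∧ ∀ a ∈ s, a ∈ (stableAnn R M).radical := by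
  classical
  induction s using Finset.induction_on with
  | empty => exact ⟨X, hX, hnf, by simp⟩
  | insert b s _ ih =>
    obtain ⟨M, hM, hMnf, hMs⟩ := ih fun a ha => hs a (Finset.mem_insert_of_mem ha)
    have := h𝒳.fg M hM
    obtain ⟨n, π, hπ, hmin⟩ := exists_minimal_cover (R := R) M
    have hi := Submodule.subtype_injective (LinearMap.ker π)
    have hex := LinearMap.exact_subtype_ker_map π
    refine ⟨ModuleCat.of R (ExtMod (LinearMap.ker π).subtype b), h𝒳.extMod_mem hi hπ hex hM b,
      fun h => hMnf (free_of_extMod_free hi hπ hex hmin (hs b (Finset.mem_insert_self _ _)) h), ?_⟩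
    intro a ha
    rcases Finset.mem_insert.1 ha with rfl | ha
    · exact Ideal.le_radical (mem_stableAnn_extMod _ _)
    · obtain ⟨N, hN⟩ := hMs a ha
      obtain ⟨f, g, hf, hg, hfg⟩ := exists_extension hi hπ hex b
      refine ⟨N * 2, ?_⟩
      rw [pow_mul]
      exact sq_mem_stableAnn_extension hf hg hfg hN (mem_stableAnn_syzygy hi hπ hex hN)

/-- A nonzero element in the kernel of `A ⊗ L → B ⊗ L` forces `Tor₁ E L` to be nonzero. This
module is killed by `stableAnn R E` and by `stableAnn R L`. -/
lemma exists_tor_killed {R : Type} [CommRing R] [IsLocalRing R] {𝒳 : Set (ModuleCat.{0} R)}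
    (h𝒳 : IsResolving R 𝒳) (hten : ClosedUnderTensor R 𝒳)
    {A B E L : Type} [AddCommGroup A] [Module R A] [AddCommGroup B] [Module R B]
    [AddCommGroup E] [Module R E] [AddCommGroup L] [Module R L]
    {f : A →ₗ[R] B} {g : B →ₗ[R] E} (hf : Function.Injective f) (hg : Function.Surjective g)
    (hfg : Function.Exact f g) (hE : ModuleCat.of R E ∈ 𝒳) (hL : ModuleCat.of R L ∈ 𝒳)
    {t : A ⊗[R] L} (ht0 : t ≠ 0) (ht : f.rTensor L t = 0) :
    ∃ L' ∈ 𝒳, Nontrivial L' ∧ (∀ a ∈ stableAnn R E, ∀ x : L', a • x = 0) ∧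
      ∀ a ∈ stableAnn R L, ∀ x : L', a • x = 0 := by
  have : Module.Finite R L := h𝒳.fg _ hL
  obtain ⟨m, ρ, hρ, -⟩ := exists_minimal_cover (R := R) L
  obtain ⟨Ω, _, _, j, hj, hjρ⟩ : ∃ (Ω : Type) (_ : AddCommGroup Ω) (_ : Module R Ω)
      (j : Ω →ₗ[R] (Fin m → R)), Function.Injective j ∧ Function.Exact j ρ :=
    ⟨LinearMap.ker ρ, inferInstance, inferInstance, (LinearMap.ker ρ).subtype,
      Submodule.subtype_injective _, LinearMap.exact_subtype_ker_map ρ⟩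
  refine ⟨ModuleCat.of R (LinearMap.ker (j.rTensor E)),
    h𝒳.tor_mem hten hj hρ hjρ hL hE, ?_, ?_, ?_⟩
  · change Nontrivial (LinearMap.ker (j.rTensor E))
    rw [Submodule.nontrivial_iff_ne_bot]
    intro hbot
    exact ht0 (rTensor_injective_of_snake hf hg hfg hρ hjρ
      (fun z hz => LinearMap.ker_eq_bot'.1 hbot z hz) ht)
  · rintro a ha ⟨x, hx⟩
    exact Subtype.ext (smul_eq_zero_of_mem_right hj hx ha)
  · rintro a ha ⟨x, hx⟩
    exact Subtype.ext (smul_eq_zero_of_mem_left hj hρ hjρ hx ha)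

/-- The transpose `T` of a nonfree `L ∈ 𝒳` lies in `𝒳`, has a free cover by `F`, and
`Tor₁ T L = ker (K ⊗ L → F ⊗ L)` is nonzero. -/
lemma exists_transpose (h𝒳 : IsResolving R 𝒳) (htr : ClosedUnderTranspose R 𝒳)
    {L : ModuleCat.{0} R} (hL : L ∈ 𝒳) (hnf : ¬ Module.Free R L) :
    ∃ (K F T : Type) (_ : AddCommGroup K) (_ : Module R K) (_ : AddCommGroup F) (_ : Module R F)
      (_ : AddCommGroup T) (_ : Module R T) (i : K →ₗ[R] F) (π : F →ₗ[R] T) (t : K ⊗[R] L),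
      Module.Free R F ∧ Module.Finite R F ∧ ModuleCat.of R T ∈ 𝒳 ∧ Function.Injective i ∧
      Function.Surjective π ∧ Function.Exact i π ∧ i.rTensor L t = 0 ∧ t ≠ 0 := by
  have := h𝒳.fg L hL
  obtain ⟨n, m, dl, π, hπ, hex, hmin, hmin'⟩ := exists_minimal_presentation (R := R) L
  have hT : ModuleCat.of R
      (((Fin n → R) →ₗ[R] R) ⧸ LinearMap.range (LinearMap.lcomp R R dl)) ∈ 𝒳 :=
    htr L hL _ ⟨n, m, dl, π, hπ, hex, hmin, hmin', ⟨LinearEquiv.refl R _⟩⟩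
  obtain ⟨t, ht, ht0⟩ : ∃ t : LinearMap.range (LinearMap.lcomp R R dl) ⊗[R] L,
      (LinearMap.range (LinearMap.lcomp R R dl)).subtype.rTensor L t = 0 ∧ t ≠ 0 := by
    by_contra! key
    have := projective_of_one_mem hπ (id_mem_freeMaps_of_transpose hπ hex key)
    exact hnf Module.free_of_flat_of_isLocalRing
  exact ⟨_, _, _, _, _, _, _, _, _, _, _, t, inferInstance, inferInstance, hT,
    Submodule.subtype_injective _, Submodule.mkQ_surjective _, LinearMap.exact_subtype_mkQ _,
    ht, ht0⟩

/-- If `Tor₁ (tr L) L` is `𝔪`-power torsion and `b ∈ 𝔪`, then it has nonzero elements killed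
by `b`, and `exists_tor_killed` applies. -/
lemma exists_smaller (h𝒳 : IsResolving R 𝒳) (hten : ClosedUnderTensor R 𝒳)
    (htr : ClosedUnderTranspose R 𝒳) {L : ModuleCat.{0} R} (hL : L ∈ 𝒳)
    (hnf : ¬ Module.Free R L) {N : ℕ} (hN : IsLocalRing.maximalIdeal R ^ N ≤ stableAnn R L)
    {b : R} (hb : b ∈ IsLocalRing.maximalIdeal R) :
    ∃ L' ∈ 𝒳, Nontrivial L' ∧ (∀ x : L', b • x = 0) ∧
      ∀ a ∈ stableAnn R L, ∀ x : L', a • x = 0 := by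
  obtain ⟨K, F, T, _, _, _, _, _, _, i, π, t, _, _, hT, hi, hπ, hex, ht, ht0⟩ :=
    exists_transpose h𝒳 htr hL hnf
  obtain ⟨c, hc, hbc⟩ := exists_ne_zero_smul_eq_zero (b := b) (N := N) ht0
    (smul_eq_zero_of_mem_right hi ht (hN (Ideal.pow_mem_pow hb N)))
  have hct : i.rTensor L (c • t) = 0 := by rw [map_smul, ht, smul_zero]
  obtain ⟨L', hL', hnt, hL'E, hL'L⟩ := exists_tor_killed h𝒳 hten (extMap_injective hi b)
    (Submodule.mkQ_surjective _) (extMap_exact i b) (h𝒳.extMod_mem hi hπ hex hT b) hL hc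
    (extMap_rTensor_eq_zero hct hbc)
  exact ⟨L', hL', hnt, hL'E b (mem_stableAnn_extMod i b), hL'L⟩

lemma not_free_of_smul_eq_zero {R M : Type} [CommRing R] [AddCommGroup M] [Module R M]
    [Nontrivial M] {b : R} (hb : b ≠ 0) (h : ∀ x : M, b • x = 0) : ¬ Module.Free R M := by
  intro hfree
  have := hfree
  let v := Module.Free.chooseBasis R M
  obtain ⟨i⟩ := v.index_nonempty
  apply hb
  have := congrArg (fun x => v.repr x i) (h (v i))
  simpa using this

/-- Iterating `exists_smaller`; being killed by `b ≠ 0` keeps the modules nonfree, and elements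
killing a module stay in its `stableAnn`, hence kill the next one. -/
lemma exists_killed (h𝒳 : IsResolving R 𝒳) (hten : ClosedUnderTensor R 𝒳)
    (htr : ClosedUnderTranspose R 𝒳) {X : ModuleCat.{0} R} (hX : X ∈ 𝒳)
    (hnf : ¬ Module.Free R X) {N : ℕ} (hN : IsLocalRing.maximalIdeal R ^ N ≤ stableAnn R X)
    (s : Finset R) (hs : ∀ a ∈ s, a ∈ IsLocalRing.maximalIdeal R) :
    ∃ L ∈ 𝒳, ¬ Module.Free R L ∧ IsLocalRing.maximalIdeal R ^ N ≤ stableAnn R L ∧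
      ∀ a ∈ s, ∀ x : L, a • x = 0 := by
  classical
  induction s using Finset.induction_on with
  | empty => exact ⟨X, hX, hnf, hN, fun a ha => absurd ha (Finset.notMem_empty a)⟩
  | insert b s _ ih =>
    obtain ⟨L, hL, hLnf, hLN, hLs⟩ := ih fun a ha => hs a (Finset.mem_insert_of_mem ha)
    by_cases hb0 : b = 0
    · refine ⟨L, hL, hLnf, hLN, fun a ha x => ?_⟩
      rcases Finset.mem_insert.1 ha with rfl | ha
      · rw [hb0, zero_smul]
      · exact hLs a ha x
    · obtain ⟨L', hL', hnt, hb, hann⟩ :=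
        exists_smaller h𝒳 hten htr hL hLnf hLN (hs b (Finset.mem_insert_self _ _))
      refine ⟨L', hL', not_free_of_smul_eq_zero hb0 hb,
        fun a ha => mem_stableAnn_of_smul_eq_zero (hann a (hLN ha)), fun a ha x => ?_⟩
      rcases Finset.mem_insert.1 ha with rfl | ha
      · exact hb x
      · exact hann a (mem_stableAnn_of_smul_eq_zero (hLs a ha)) x

/-- A nonzero module killed by `𝔪` is a vector space over `k`, so `k` is a direct summand. -/
lemma exists_residueField_summand {R : Type} [CommRing R] [IsLocalRing R] {L : Type} [AddCommGroup L] [Module R L] [Nontrivial L]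
    (h : ∀ a ∈ IsLocalRing.maximalIdeal R, ∀ x : L, a • x = 0) :
    ∃ (i : IsLocalRing.ResidueField R →ₗ[R] L) (p : L →ₗ[R] IsLocalRing.ResidueField R),
      p ∘ₗ i = LinearMap.id := by
  let k := IsLocalRing.ResidueField R
  have htors : Module.IsTorsionBySet R L (IsLocalRing.maximalIdeal R : Set R) :=
    fun x a => h a a.2 x
  let _ : Module k L := htors.module
  have : IsScalarTower R k L := htors.isScalarTower
  obtain ⟨x, hx⟩ := exists_ne (0 : L)
  obtain ⟨f, hf⟩ := Module.Projective.exists_dual_ne_zero k hx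
  refine ⟨(LinearMap.toSpanSingleton k L x).restrictScalars R,
    ((f x)⁻¹ • f).restrictScalars R, LinearMap.ext fun c => ?_⟩
  change (f x)⁻¹ • f (c • x) = c
  rw [map_smul, smul_eq_mul, smul_eq_mul, mul_comm c, inv_mul_cancel_left₀ hf]

end Main

/-- If a resolving subcategory of `mod R` over a Noetherian local ring is
closed under tensor products and transposes and contains a nonfree module, then it contains
the residue field `k`. -/
theorem residueField_mem_of_nonfree
    (R : Type) [CommRing R] [IsNoetherianRing R] [IsLocalRing R]
    (𝒳 : Set (ModuleCat.{0} R)) (h𝒳 : IsResolving R 𝒳)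
    (hten : ClosedUnderTensor R 𝒳) (htr : ClosedUnderTranspose R 𝒳)
    (X : ModuleCat.{0} R) (hX : X ∈ 𝒳) (hnf : ¬ Module.Free R X) :
    ModuleCat.of R (IsLocalRing.ResidueField R) ∈ 𝒳 := by
  obtain ⟨s, hs⟩ := (IsLocalRing.maximalIdeal R).fg_of_isNoetherianRing
  have hsm : ∀ a ∈ s, a ∈ IsLocalRing.maximalIdeal R := fun a ha => by
    rw [← hs]; exact Submodule.subset_span ha
  obtain ⟨M, hM, hMnf, hMs⟩ := exists_nonfree_radical h𝒳 hX hnf s hsm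
  obtain ⟨N, hN⟩ := Ideal.exists_pow_le_of_le_radical_of_fg
    (show IsLocalRing.maximalIdeal R ≤ (stableAnn R M).radical by
      conv_lhs => rw [← hs]
      exact Submodule.span_le.2 hMs)
    (IsLocalRing.maximalIdeal R).fg_of_isNoetherianRing
  obtain ⟨L, hL, hLnf, -, hLs⟩ := exists_killed h𝒳 hten htr hM hMnf hN s hsm
  have : Nontrivial L := by
    by_contra h
    rw [not_nontrivial_iff_subsingleton] at h
    exact hLnf (Module.Free.of_subsingleton R L)
  refine h𝒳.summand_mem L _ (exists_residueField_summand fun a ha x => ?_) hL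
  have hle : Ideal.span (s : Set R) ≤ Module.annihilator R L :=
    Submodule.span_le.2 fun a ha => Module.mem_annihilator.2 (hLs a ha)
  rw [hs] at hle
  exact Module.mem_annihilator.1 (hle ha) x

end
end

section
/- Let R be a commutative Noetherian local ring and M a finitely generated R-module. Then the nonfree locus of M equals the nonfree locus of its Auslander transpose: V(M) = V(tr M). -/
/-!
Let `A` be the matrix of the given presentation of `M`; its transpose `Aᵀ` presents `T`. After
localizing at a prime `p`, both modules are presented by the images of these matrices over the
local ring `R_p`, so freeness equals projectivity there. The cokernel of a matrix `A` over any
commutative ring is projective if and only if `A * B * A = A` for some `B`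
(`projective_iff_exists_mul_mul_eq`, localized in `free_localizedModule_iff`). Transposing this
equation gives `Aᵀ * Bᵀ * Aᵀ = Aᵀ`, so the condition for `A` and the one for `Aᵀ` coincide.
-/

open TensorProduct

noncomputable section

/-- A cokernel of a map `A` of finite free modules is projective exactly when `A` is von Neumann
regular, i.e. has a generalized inverse `B`: a section `s` of `π` makes `1 - s ∘ π` factor
through `A`, and conversely `1 - A * B` descends to a section of `π`. -/
lemma projective_iff_exists_mul_mul_eq {S N : Type} [CommRing S] [AddCommGroup N] [Module S N]
    {n m : ℕ} (A : Matrix (Fin m) (Fin n) S) (π : (Fin m → S) →ₗ[S] N)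
    (hπ : Function.Surjective π) (hex : Function.Exact (Matrix.toLin' A) π) :
    Module.Projective S N ↔ ∃ B : Matrix (Fin n) (Fin m) S, A * B * A = A := by
  constructor
  · intro hN
    obtain ⟨s, hs⟩ := LinearMap.exists_rightInverse_of_surjective π (LinearMap.range_eq_top.2 hπ)
    have hs' (x : N) : π (s x) = x := LinearMap.congr_fun hs x
    have hlift (i : Fin m) : ∃ y, Matrix.toLin' A y = Pi.single i 1 - s (π (Pi.single i 1)) :=
      (hex _).1 (by rw [map_sub, hs', sub_self])
    choose y hy using hlift
    let h : (Fin m → S) →ₗ[S] (Fin n → S) := (Pi.basisFun S (Fin m)).constr S y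
    have hh : Matrix.toLin' A ∘ₗ h = LinearMap.id - s ∘ₗ π := by
      refine (Pi.basisFun S (Fin m)).ext fun i ↦ ?_
      rw [LinearMap.comp_apply, Module.Basis.constr_basis, hy]
      simp
    refine ⟨LinearMap.toMatrix' h, Matrix.toLin'.injective ?_⟩
    rw [Matrix.toLin'_mul, Matrix.toLin'_mul, Matrix.toLin'_toMatrix', hh, LinearMap.sub_comp,
      LinearMap.comp_assoc, hex.linearMap_comp_eq_zero]
    simp
  · rintro ⟨B, hB⟩
    let g : (Fin m → S) →ₗ[S] (Fin m → S) := LinearMap.id - Matrix.toLin' (A * B)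
    have hg : LinearMap.ker π ≤ LinearMap.ker g := by
      intro x hx
      obtain ⟨z, rfl⟩ := (hex x).1 hx
      have : Matrix.toLin' (A * B) (Matrix.toLin' A z) = Matrix.toLin' A z := by
        rw [← Matrix.toLin'_mul_apply, hB]
      simp only [LinearMap.mem_ker, g, LinearMap.sub_apply, LinearMap.id_apply, this, sub_self]
    let s : N →ₗ[S] (Fin m → S) :=
      (LinearMap.ker π).liftQ g hg ∘ₗ (π.quotKerEquivOfSurjective hπ).symm.toLinearMap
    have hs (x : Fin m → S) : s (π x) = g x := by
      have : (π.quotKerEquivOfSurjective hπ).symm (π x) = (LinearMap.ker π).mkQ x := by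
        rw [LinearEquiv.symm_apply_eq]; rfl
      simp only [s, LinearMap.comp_apply, LinearEquiv.coe_coe, this]
      rfl
    refine Module.Projective.of_split s π ?_
    ext x
    obtain ⟨x, rfl⟩ := hπ x
    have h0 : π (Matrix.toLin' (A * B) x) = 0 := by
      rw [Matrix.toLin'_mul_apply]; exact hex.apply_apply_eq_zero _
    simp only [LinearMap.comp_apply, hs, g, LinearMap.sub_apply, LinearMap.id_apply, map_sub, h0,
      sub_zero]

/-- Freeness of `N` at `p`, read off from a presentation matrix `A` of `N`: the localization of
`N` is presented by the image of `A` over the local ring at `p`, where finite projective modules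
are free. -/
lemma free_localizedModule_iff {R N : Type} [CommRing R] [AddCommGroup N] [Module R N]
    {n m : ℕ} (A : Matrix (Fin m) (Fin n) R) (π : (Fin m → R) →ₗ[R] N)
    (hπ : Function.Surjective π) (hex : Function.Exact (Matrix.toLin' A) π)
    (p : Ideal R) [p.IsPrime] :
    Module.Free (Localization.AtPrime p) (LocalizedModule p.primeCompl N) ↔
      ∃ B : Matrix (Fin n) (Fin m) (Localization.AtPrime p),
        A.map (algebraMap R (Localization.AtPrime p)) * B *
          A.map (algebraMap R (Localization.AtPrime p)) =
            A.map (algebraMap R (Localization.AtPrime p)) := by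
  let f (k : ℕ) : (Fin k → R) →ₗ[R] (Fin k → Localization.AtPrime p) :=
    .pi fun i ↦ Algebra.linearMap R (Localization.AtPrime p) ∘ₗ .proj i
  have hf (k : ℕ) : IsLocalizedModule p.primeCompl (f k) := inferInstance
  let q := LocalizedModule.mkLinearMap p.primeCompl N
  let π' : (Fin m → Localization.AtPrime p) →ₗ[Localization.AtPrime p]
      LocalizedModule p.primeCompl N :=
    IsLocalizedModule.mapExtendScalars p.primeCompl (f m) q (Localization.AtPrime p) π
  have hπ' : Function.Surjective π' :=
    IsLocalizedModule.map_surjective p.primeCompl (f m) q π hπ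
  have hA : IsLocalizedModule.map p.primeCompl (f n) (f m) (Matrix.toLin' A) =
      (Matrix.toLin' (A.map (algebraMap R (Localization.AtPrime p)))).restrictScalars R := by
    apply IsLocalizedModule.linearMap_ext p.primeCompl (f n) (f m)
    refine LinearMap.ext fun x ↦ funext fun i ↦ ?_
    simp [f, IsLocalizedModule.map_apply, Matrix.mulVec, dotProduct]
  have hex' : Function.Exact
      (Matrix.toLin' (A.map (algebraMap R (Localization.AtPrime p)))) π' := by
    have h := IsLocalizedModule.map_exact p.primeCompl (f n) (f m) q _ _ hex
    rw [hA] at h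
    exact h
  rw [← projective_iff_exists_mul_mul_eq _ π' hπ' hex']
  have := Module.Finite.of_surjective π' hπ'
  exact ⟨fun _ ↦ inferInstance, fun _ ↦ Module.free_of_flat_of_isLocalRing⟩

/-- The nonfree locus of a finitely generated module equals the nonfree
locus of its Auslander transpose. -/
theorem nonfreeLocus_transpose
    (R : Type) [CommRing R] [IsNoetherianRing R] [IsLocalRing R]
    (M : Type) [AddCommGroup M] [Module R M] [Module.Finite R M]
    (T : Type) [AddCommGroup T] [Module R T]
    (hT : IsTransposeOf R R M T) :
    nonfreeLocus R M = nonfreeLocus R T := by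
  obtain ⟨n, m, dl, π, hπ, hex, -, -, ⟨e⟩⟩ := hT
  obtain ⟨A, rfl⟩ := Matrix.toLin'.surjective dl
  -- Identify the dual of `Rⁿ` with `Rⁿ` by the dot product; the dual of `A` becomes `Aᵀ`.
  let δ (k : ℕ) : (Fin k → R) ≃ₗ[R] ((Fin k → R) →ₗ[R] R) := dotProductEquiv R (Fin k)
  let Q := LinearMap.range (LinearMap.lcomp R R (Matrix.toLin' A))
  let ρ : (Fin n → R) →ₗ[R] T := e.symm.toLinearMap ∘ₗ Q.mkQ ∘ₗ (δ n).toLinearMap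
  have hρ : Function.Surjective ρ :=
    e.symm.surjective.comp (Q.mkQ_surjective.comp (δ n).surjective)
  have hδ (x : Fin m → R) : LinearMap.lcomp R R (Matrix.toLin' A) (δ m x) =
      δ n (Matrix.toLin' A.transpose x) := by
    refine LinearMap.ext fun y ↦ ?_
    simp [δ, Matrix.dotProduct_mulVec, Matrix.mulVec_transpose]
  have hexT : Function.Exact (Matrix.toLin' A.transpose) ρ := by
    intro y
    have h1 : ρ y = 0 ↔ δ n y ∈ Q := by
      simp [ρ]
    rw [h1]
    constructor
    · rintro ⟨φ, hφ⟩
      obtain ⟨x, rfl⟩ := (δ m).surjective φ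
      exact ⟨x, (δ n).injective ((hδ x).symm.trans hφ)⟩
    · rintro ⟨x, rfl⟩
      exact ⟨δ m x, hδ x⟩
  ext p
  refine not_congr ?_
  rw [free_localizedModule_iff A π hπ hex, free_localizedModule_iff A.transpose ρ hρ hexT]
  constructor
  · rintro ⟨B, hB⟩
    refine ⟨B.transpose, ?_⟩
    simpa [Matrix.transpose_mul, Matrix.mul_assoc, Matrix.transpose_map]
      using congrArg Matrix.transpose hB
  · rintro ⟨B, hB⟩
    refine ⟨B.transpose, ?_⟩
    simpa [Matrix.transpose_mul, Matrix.mul_assoc, Matrix.transpose_map]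
      using congrArg Matrix.transpose hB

end
end

section
/- Let R be a commutative Noetherian local ring, X a resolving subcategory of mod R, M a finitely generated R-module, and Γ a nonempty finite subset of Spec R such that M_p ∈ add_{R_p}(X_p) for every p ∈ Γ. Then there exists a short exact sequence 0 → L → N → X → 0 of finitely generated R-modules such that: X belongs to X, M is a direct summand of N, V(L) ⊆ V(M), and V(L) ∩ Γ = ∅. -/
/-!
Call an endomorphism of `M` *`𝒳`-factoring* if it factors through a module of `𝒳`. Since `𝒳` is
closed under finite direct sums, these endomorphisms form an `R`-submodule of `End M`
(`factorSubmodule`), so the `r : R` for which `r • id_M` is `𝒳`-factoring form an ideal.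

If `M_p` lies in `add 𝒳_p`, then `id_{M_p}` is a sum of maps factoring through localizations of
modules of `𝒳`; clearing denominators puts some `u ∉ p` into this ideal
(`exists_smul_id_mem_factorSubmodule`). Prime avoidance gives a single `t` outside all primes
of `Γ` with `t • id_M = b ∘ a`, where `a : M → X₀` and `b : X₀ → M` with `X₀ ∈ 𝒳`.

Let `φ : F → M` be a finite free cover, put `X = X₀ × F ∈ 𝒳`, and let `K` be the kernel of the
surjection `(b, φ) : X → M`. The map `M × K × F → X` given by `(a, 0)`, the inclusion and the
second injection is surjective, and its kernel is isomorphic to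
`L = ker ((t, φ) : M × F → M)` (`twistedKernel`), with `M` a summand of the middle term.
When `M_p` is free, the surjection `(M × F)_p → M_p` splits, so `L_p` is projective, hence free
(`projective_localized_twistedKernel`). When `t ∉ p`, the projection `L → F` becomes an
isomorphism at `p` (`free_localized_twistedKernel`), so `L_p` is free for every `p ∈ Γ`.
-/

open TensorProduct

noncomputable section

/-! ### Closure properties of resolving subcategories -/

section Resolving

variable {R : Type} [CommRing R] {𝒳 : Set (ModuleCat.{0} R)}

lemma IsResolving.prod_mem_s11 (h : IsResolving R 𝒳) {X Y : ModuleCat.{0} R} (hX : X ∈ 𝒳)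
    (hY : Y ∈ 𝒳) : ModuleCat.of R (X × Y) ∈ 𝒳 :=
  h.extension_mem X (ModuleCat.of R (X × Y)) Y (LinearMap.inl R X Y) (LinearMap.snd R X Y)
    LinearMap.inl_injective LinearMap.snd_surjective Function.Exact.inl_snd hX hY

lemma IsResolving.of_subsingleton (h : IsResolving R 𝒳) (X : ModuleCat.{0} R)
    [Subsingleton X] : X ∈ 𝒳 :=
  h.summand_mem (ModuleCat.of R R) X ⟨0, 0, LinearMap.ext fun _ => Subsingleton.elim _ _⟩
    h.ring_mem

lemma IsResolving.fin_mem (h : IsResolving R 𝒳) (n : ℕ) :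
    ModuleCat.of R (Fin n → R) ∈ 𝒳 := by
  induction n with
  | zero => exact h.of_subsingleton (ModuleCat.of R (Fin 0 → R))
  | succ n ih =>
    exact h.mem_of_iso _ (ModuleCat.of R (Fin (n + 1) → R))
      ⟨Fin.consLinearEquiv R (fun _ : Fin n.succ => R)⟩ (h.prod_mem_s11 h.ring_mem ih)

/-- The submodule of `End M` of endomorphisms that factor through a module of the resolving
subcategory `𝒳`. -/
def factorSubmodule (h : IsResolving R 𝒳) (M : Type) [AddCommGroup M] [Module R M] :
    Submodule R (M →ₗ[R] M) where
  carrier := {e | ∃ X ∈ 𝒳, ∃ (a : M →ₗ[R] X) (b : X →ₗ[R] M), e = b ∘ₗ a}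
  zero_mem' := ⟨ModuleCat.of R R, h.ring_mem, 0, 0, by simp⟩
  add_mem' := by
    rintro _ _ ⟨X, hX, a, b, rfl⟩ ⟨Y, hY, c, d, rfl⟩
    refine ⟨ModuleCat.of R (X × Y), h.prod_mem_s11 hX hY, a.prod c, b.coprod d, ?_⟩
    ext m
    simp
  smul_mem' := by
    rintro r _ ⟨X, hX, a, b, rfl⟩
    exact ⟨X, hX, a, r • b, by rw [LinearMap.smul_comp]⟩

/-- Clearing denominators: if `M_p ∈ add 𝒳_p`, then multiplication by some `u ∉ p` on `M`
factors through a module of `𝒳`. -/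
lemma exists_smul_id_mem_factorSubmodule [IsNoetherianRing R] (h : IsResolving R 𝒳)
    (M : Type) [AddCommGroup M] [Module R M] [Module.Finite R M] (p : PrimeSpectrum R)
    (hp : memAdd (Localization.AtPrime p.asIdeal) (locCat R 𝒳 p)
      (LocalizedModule p.asIdeal.primeCompl M)) :
    ∃ u : R, u ∉ p.asIdeal ∧ u • (LinearMap.id : M →ₗ[R] M) ∈ factorSubmodule h M := by
  classical
  obtain ⟨n, Y, hY, s, r, hrs⟩ := hp
  set S := p.asIdeal.primeCompl with hS
  let mk := LocalizedModule.mkLinearMap S M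
  -- The summands `r_i ∘ s_i` of the identity of `M_p`.
  let θ : Fin n → LocalizedModule S M →ₗ[Localization S] LocalizedModule S M := fun i =>
    r ∘ₗ LinearMap.single _ (fun i => (Y i : Type)) i ∘ₗ LinearMap.proj i ∘ₗ s
  have hθ : ∀ i, ∃ u : S, ∃ e ∈ factorSubmodule h M, ∀ m, mk (e m) = (u : R) • θ i (mk m) := by
    intro i
    obtain ⟨X, hX, ⟨ε⟩⟩ := hY i
    have := h.fg X hX
    have : Module.FinitePresentation R M := Module.finitePresentation_of_finite R M
    have : Module.FinitePresentation R X := Module.finitePresentation_of_finite R X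
    let s' : LocalizedModule S M →ₗ[Localization S] LocalizedModule S X :=
      ε.toLinearMap ∘ₗ LinearMap.proj i ∘ₗ s
    let r' : LocalizedModule S X →ₗ[Localization S] LocalizedModule S M :=
      r ∘ₗ LinearMap.single _ (fun i => (Y i : Type)) i ∘ₗ ε.symm.toLinearMap
    obtain ⟨a, d, ha⟩ := Module.FinitePresentation.exists_lift_of_isLocalizedModule S
      (LocalizedModule.mkLinearMap S X) (s'.restrictScalars R ∘ₗ mk)
    obtain ⟨b, e, hb⟩ := Module.FinitePresentation.exists_lift_of_isLocalizedModule S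
      mk (r'.restrictScalars R ∘ₗ LocalizedModule.mkLinearMap S X)
    refine ⟨e * d, b ∘ₗ a, ⟨X, hX, a, b, rfl⟩, fun m => ?_⟩
    have ha' : LocalizedModule.mkLinearMap S X (a m) = (d : R) • s' (mk m) :=
      LinearMap.congr_fun ha m
    have hb' : mk (b (a m)) = (e : R) • r' (LocalizedModule.mkLinearMap S X (a m)) :=
      LinearMap.congr_fun hb (a m)
    have hrs' : r' (s' (mk m)) = θ i (mk m) := by
      simp [r', s', θ]
    rw [LinearMap.comp_apply, hb', ha', LinearMap.map_smul_of_tower, hrs', smul_smul]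
    rfl
  have hsum : ∀ T : Finset (Fin n), ∃ u : S, ∃ e ∈ factorSubmodule h M,
      ∀ m, mk (e m) = (u : R) • ∑ i ∈ T, θ i (mk m) := by
    intro T
    induction T using Finset.induction_on with
    | empty => exact ⟨1, 0, Submodule.zero_mem _, fun m => by simp⟩
    | insert i T hi ih =>
      obtain ⟨u, e, he, hu⟩ := ih
      obtain ⟨v, e', he', hv⟩ := hθ i
      refine ⟨u * v, (u : R) • e' + (v : R) • e,
        Submodule.add_mem _ (Submodule.smul_mem _ _ he') (Submodule.smul_mem _ _ he), fun m => ?_⟩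
      rw [Finset.sum_insert hi, LinearMap.add_apply, LinearMap.smul_apply, LinearMap.smul_apply,
        map_add, map_smul, map_smul, hu, hv, smul_add, smul_smul, smul_smul, Submonoid.coe_mul,
        mul_comm (v : R)]
  obtain ⟨u, e, he, hu⟩ := hsum Finset.univ
  have hid : ∀ x, ∑ i, θ i x = x := by
    intro x
    have h1 : ∑ i, θ i x = r (∑ i, Pi.single i (s x i)) := by
      rw [map_sum]
      rfl
    rw [h1, Finset.univ_sum_single]
    exact LinearMap.congr_fun hrs x
  have hcomp : mk ∘ₗ e = mk ∘ₗ ((u : R) • LinearMap.id) := by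
    ext m
    simp [hu, hid]
  obtain ⟨v, hv⟩ := Module.Finite.exists_smul_of_comp_eq_of_isLocalizedModule S mk _ _ hcomp
  refine ⟨v * u, (v * u).2, ?_⟩
  have hv' : (v : R) • e = (v : R) • (u : R) • (LinearMap.id : M →ₗ[R] M) := hv
  rw [mul_smul, ← hv']
  exact Submodule.smul_mem _ _ he

end Resolving

/-! ### The kernel of `(t, φ) : M × F → M` and its localizations -/

section TwistedKernel

variable {R : Type} [CommRing R] {M F : Type} [AddCommGroup M] [Module R M]
  [AddCommGroup F] [Module R F]

/-- The kernel of `(m, y) ↦ t m + φ y`, i.e. the pullback of `φ` along `-t : M → M`. -/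
def twistedKernel (t : R) (φ : F →ₗ[R] M) : Submodule R (M × F) :=
  LinearMap.ker ((t • LinearMap.id : M →ₗ[R] M).coprod φ)

lemma mem_twistedKernel {t : R} {φ : F →ₗ[R] M} {x : M × F} :
    x ∈ twistedKernel t φ ↔ t • x.1 + φ x.2 = 0 := by
  simp [twistedKernel]

/-- Where `t` is invertible, the kernel of `(t, φ)` is the graph of `-t⁻¹φ`, a copy of `F`. -/
lemma free_localized_twistedKernel (S : Submonoid R) (t : R) (ht : t ∈ S) (φ : F →ₗ[R] M)
    [Module.Free (Localization S) (LocalizedModule S F)] :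
    Module.Free (Localization S) (LocalizedModule S (twistedKernel t φ)) := by
  let q : twistedKernel t φ →ₗ[R] F := LinearMap.snd R M F ∘ₗ (twistedKernel t φ).subtype
  have hbij : Function.Bijective (LocalizedModule.map S q) := by
    constructor
    · rw [injective_iff_map_eq_zero]
      intro x
      induction x using LocalizedModule.induction_on with
      | h l s =>
        intro hx
        rw [LocalizedModule.map_mk, IsLocalizedModule.mk_eq_mk',
          IsLocalizedModule.mk'_eq_zero'] at hx
        obtain ⟨c, hc⟩ := hx
        rw [IsLocalizedModule.mk_eq_mk', IsLocalizedModule.mk'_eq_zero']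
        refine ⟨c * ⟨t, ht⟩, ?_⟩
        have hl := mem_twistedKernel.1 l.2
        have hc' : (c : R) • l.1.2 = 0 := hc
        apply Subtype.ext
        change ((c : R) * t) • l.1 = 0
        ext
        · have : (c : R) • (t • l.1.1 + φ l.1.2) = 0 := by rw [hl, smul_zero]
          rw [smul_add, ← map_smul, hc', map_zero, add_zero, smul_smul] at this
          simpa using this
        · change ((c : R) * t) • l.1.2 = 0
          rw [mul_comm, mul_smul, hc', smul_zero]
    · intro x
      induction x using LocalizedModule.induction_on with
      | h y s =>
        -- `y / s = (t y) / (t s)`, and `t y` is the image of `(-φ y, t y)`.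
        refine ⟨LocalizedModule.mk ⟨(-φ y, t • y), mem_twistedKernel.2 (by simp)⟩
          (⟨t, ht⟩ * s), ?_⟩
        rw [LocalizedModule.map_mk]
        exact LocalizedModule.mk_cancel_common_left ⟨t, ht⟩ s y
  exact Module.Free.of_equiv (LinearEquiv.ofBijective _ hbij).symm

lemma projective_of_exact {A P Q T : Type} [CommRing A] [AddCommGroup P] [Module A P]
    [AddCommGroup Q] [Module A Q] [AddCommGroup T] [Module A T]
    [Module.Projective A Q] [Module.Projective A T] (f : P →ₗ[A] Q) (g : Q →ₗ[A] T)
    (hf : Function.Injective f) (hex : Function.Exact f g) (hg : Function.Surjective g) :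
    Module.Projective A P := by
  obtain ⟨σ, hσ⟩ := Module.projective_lifting_property g LinearMap.id hg
  obtain ⟨e, he, -⟩ := hex.splitSurjectiveEquiv hf ⟨σ, hσ⟩
  refine Module.Projective.of_split f (LinearMap.fst A P T ∘ₗ e.toLinearMap) ?_
  rw [he]
  ext x
  simp

lemma projective_localized_of_exact {P Q T : Type} [AddCommGroup P] [Module R P]
    [AddCommGroup Q] [Module R Q] [AddCommGroup T] [Module R T] (S : Submonoid R)
    [Module.Projective (Localization S) (LocalizedModule S Q)]
    [Module.Projective (Localization S) (LocalizedModule S T)] (f : P →ₗ[R] Q) (g : Q →ₗ[R] T)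
    (hf : Function.Injective f) (hex : Function.Exact f g) (hg : Function.Surjective g) :
    Module.Projective (Localization S) (LocalizedModule S P) :=
  projective_of_exact (LocalizedModule.map S f) (LocalizedModule.map S g)
    (LocalizedModule.map_injective S f hf) (LocalizedModule.map_exact S f g hex)
    (LocalizedModule.map_surjective S g hg)

/-- Where `M` becomes projective, the surjection `(t, φ)` splits. -/
lemma projective_localized_twistedKernel (S : Submonoid R) (t : R) (φ : F →ₗ[R] M)
    (hφ : Function.Surjective φ)
    [Module.Projective (Localization S) (LocalizedModule S F)]
    [Module.Projective (Localization S) (LocalizedModule S M)] :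
    Module.Projective (Localization S) (LocalizedModule S (twistedKernel t φ)) := by
  let ψ : M × F →ₗ[R] M := (t • LinearMap.id : M →ₗ[R] M).coprod φ
  have hψ : Function.Surjective ψ := fun m => by
    obtain ⟨y, rfl⟩ := hφ m
    exact ⟨(0, y), by simp [ψ]⟩
  have : Module.Projective (Localization S) (LocalizedModule S (M × F)) := by
    refine Module.Projective.of_split
      ((LocalizedModule.map S (LinearMap.fst R M F)).prod
        (LocalizedModule.map S (LinearMap.snd R M F)))
      ((LocalizedModule.map S (LinearMap.inl R M F)).coprod
        (LocalizedModule.map S (LinearMap.inr R M F))) ?_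
    refine LinearMap.ext fun x => ?_
    induction x using LocalizedModule.induction_on with
    | h x s =>
      simp only [LinearMap.comp_apply, LinearMap.prod_apply, Function.prod, LinearMap.coprod_apply,
        LocalizedModule.map_mk, LinearMap.id_apply]
      rw [IsLocalizedModule.mk_eq_mk', IsLocalizedModule.mk_eq_mk', IsLocalizedModule.mk_eq_mk',
        ← IsLocalizedModule.mk'_add]
      simp
  exact projective_localized_of_exact S (twistedKernel t φ).subtype ψ
    (Submodule.subtype_injective _) (LinearMap.exact_subtype_ker_map ψ) hψ

end TwistedKernel

/-- If `M_p ∈ add_{R_p} 𝒳_p` for all `p` in a nonempty finite set `Γ` of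
primes, then there is a short exact sequence `0 → L → N → X → 0` with `X ∈ 𝒳`, `M` a direct
summand of `N`, `V(L) ⊆ V(M)` and `V(L) ∩ Γ = ∅`. -/
theorem approx_sequence_of_locally_in_add
    (R : Type) [CommRing R] [IsNoetherianRing R] [IsLocalRing R]
    (𝒳 : Set (ModuleCat.{0} R)) (h𝒳 : IsResolving R 𝒳)
    (M : ModuleCat.{0} R) (hMfg : Module.Finite R M)
    (Γ : Finset (PrimeSpectrum R)) (hΓ : Γ.Nonempty)
    (hloc : ∀ p ∈ Γ, memAdd (Localization.AtPrime p.asIdeal) (locCat R 𝒳 p)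
      (LocalizedModule p.asIdeal.primeCompl M)) :
    ∃ (L N X' : ModuleCat.{0} R) (f : L →ₗ[R] N) (g : N →ₗ[R] X'),
      Module.Finite R L ∧ Module.Finite R N ∧
      Function.Injective f ∧ Function.Surjective g ∧ Function.Exact f g ∧
      X' ∈ 𝒳 ∧
      (∃ (i : M →ₗ[R] N) (pr : N →ₗ[R] M), pr ∘ₗ i = LinearMap.id) ∧
      nonfreeLocus R L ⊆ nonfreeLocus R M ∧
      nonfreeLocus R L ∩ (Γ : Set (PrimeSpectrum R)) = ∅ := by
  obtain ⟨t, htΓ, X₀, hX₀, a, b, hab⟩ : ∃ t : R, (∀ p ∈ Γ, t ∉ p.asIdeal) ∧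
      t • (LinearMap.id : M →ₗ[R] M) ∈ factorSubmodule h𝒳 M := by
    let I : Ideal R := (factorSubmodule h𝒳 M).comap (LinearMap.toSpanSingleton R _ LinearMap.id)
    by_contra! hcon
    have hsub : (I : Set R) ⊆ ⋃ p ∈ (Γ : Set (PrimeSpectrum R)), (p.asIdeal : Set R) := by
      intro t ht
      by_contra hnot
      refine hcon t (fun p hp htp => hnot ?_) ht
      exact Set.mem_biUnion (Finset.mem_coe.2 hp) htp
    obtain ⟨p₀, -⟩ := hΓ
    obtain ⟨p, hp, hIp⟩ :=
      (Ideal.subset_union_prime p₀ p₀ (fun p _ _ _ => p.isPrime)).1 hsub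
    obtain ⟨u, hu, hu'⟩ := exists_smul_id_mem_factorSubmodule h𝒳 M p (hloc p hp)
    exact hu (hIp hu')
  have hab' : ∀ m, b (a m) = t • m := fun m => (LinearMap.congr_fun hab m).symm
  obtain ⟨n, φ, hφ⟩ := Module.Finite.exists_fin' R M
  have := h𝒳.fg X₀ hX₀
  let K := LinearMap.ker (b.coprod φ)
  have hK : ∀ k : K, b k.1.1 + φ k.1.2 = 0 := fun k => LinearMap.mem_ker.1 k.2
  -- Surjectivity comes from `K + F = X₀ × F`; the component `a` makes the kernel free on `Γ`.
  let g : M × K × (Fin n → R) →ₗ[R] X₀ × (Fin n → R) :=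
    (LinearMap.inl R X₀ (Fin n → R) ∘ₗ a).coprod
      (K.subtype.coprod (LinearMap.inr R X₀ (Fin n → R)))
  have hg : ∀ m k y, g (m, k, y) = (a m + k.1.1, k.1.2 + y) := fun m k y => by
    ext <;> simp [g]
  have hL : ∀ l : twistedKernel t φ, t • l.1.1 + φ l.1.2 = 0 := fun l => mem_twistedKernel.1 l.2
  -- The `K`-coordinate of an element of `ker g` is determined by the other two.
  let κ : twistedKernel t φ →ₗ[R] K := LinearMap.codRestrict K
    (-((a.prodMap LinearMap.id) ∘ₗ (twistedKernel t φ).subtype)) (fun l => by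
      have := hL l
      simp only [K, LinearMap.mem_ker]
      simp [hab', ← neg_add, this])
  have hκ : ∀ l, (κ l).1 = (-a l.1.1, -l.1.2) := fun l => by ext <;> simp [κ]
  let f : twistedKernel t φ →ₗ[R] M × K × (Fin n → R) :=
    (LinearMap.fst R M _ ∘ₗ (twistedKernel t φ).subtype).prod
      (κ.prod (LinearMap.snd R M _ ∘ₗ (twistedKernel t φ).subtype))
  have hf : ∀ l, f l = (l.1.1, κ l, l.1.2) := fun l => rfl
  have hfree : ∀ p : PrimeSpectrum R, (p ∉ nonfreeLocus R M ∨ p ∈ Γ) →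
      p ∉ nonfreeLocus R (twistedKernel t φ) := by
    intro p hp
    rw [nonfreeLocus, Set.mem_ofPred_eq, not_not]
    have hF : Module.Free (Localization p.asIdeal.primeCompl)
        (LocalizedModule p.asIdeal.primeCompl (Fin n → R)) :=
      Module.free_of_isLocalizedModule p.asIdeal.primeCompl
        (LocalizedModule.mkLinearMap p.asIdeal.primeCompl (Fin n → R))
    rcases hp with hp | hp
    · rw [nonfreeLocus, Set.mem_ofPred_eq, not_not] at hp
      have : Module.Free (Localization p.asIdeal.primeCompl)
        (LocalizedModule p.asIdeal.primeCompl M) := hp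
      have : Module.Projective (Localization p.asIdeal.primeCompl)
        (LocalizedModule p.asIdeal.primeCompl M) := Module.Projective.of_free
      have : Module.Projective (Localization p.asIdeal.primeCompl)
        (LocalizedModule p.asIdeal.primeCompl (Fin n → R)) := Module.Projective.of_free
      have : Module.Projective (Localization.AtPrime p.asIdeal)
          (LocalizedModule p.asIdeal.primeCompl (twistedKernel t φ)) :=
        projective_localized_twistedKernel p.asIdeal.primeCompl t φ hφ
      have : Module.Finite (Localization.AtPrime p.asIdeal)
          (LocalizedModule p.asIdeal.primeCompl (twistedKernel t φ)) :=
        inferInstanceAs (Module.Finite (Localization p.asIdeal.primeCompl) _)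
      exact Module.free_of_flat_of_isLocalRing
    · exact free_localized_twistedKernel p.asIdeal.primeCompl t (htΓ p hp) φ
  refine ⟨ModuleCat.of R (twistedKernel t φ), ModuleCat.of R (M × K × (Fin n → R)),
    ModuleCat.of R (X₀ × (Fin n → R)), f, g, ?_, ?_, ?_, ?_, ?_, ?_, ?_, ?_, ?_⟩
  · exact inferInstanceAs (Module.Finite R (twistedKernel t φ))
  · exact inferInstanceAs (Module.Finite R (M × K × (Fin n → R)))
  · intro l l' hll
    change f l = f l' at hll
    rw [hf, hf, Prod.mk.injEq, Prod.mk.injEq] at hll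
    exact Subtype.ext (Prod.ext hll.1 hll.2.2)
  · rintro ⟨x, y⟩
    -- `z` lifts the image of `(x, y)` in `M`, so `(x, y - z)` lies in `K`.
    obtain ⟨z, hz⟩ := hφ (b x + φ y)
    refine ⟨(0, ⟨(x, y - z), ?_⟩, z), ?_⟩
    · simp [K, hz]
    · change g _ = _
      rw [hg]
      simp
  · rintro ⟨m, k, y⟩
    change g (m, k, y) = 0 ↔ ∃ l, f l = (m, k, y)
    rw [hg]
    constructor
    · intro h0
      obtain ⟨h1, h2⟩ := Prod.mk.inj h0
      have h1' : k.1.1 = -a m := by rw [eq_neg_iff_add_eq_zero, add_comm]; exact h1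
      have h2' : k.1.2 = -y := by rw [eq_neg_iff_add_eq_zero]; exact h2
      have hmem : (m, y) ∈ twistedKernel t φ := by
        rw [mem_twistedKernel]
        have := hK k
        rw [h1', h2', map_neg, map_neg, hab', ← neg_add, neg_eq_zero] at this
        exact this
      refine ⟨⟨(m, y), hmem⟩, ?_⟩
      rw [hf]
      have : κ ⟨(m, y), hmem⟩ = k :=
        Subtype.ext ((hκ _).trans (Prod.ext h1'.symm h2'.symm))
      rw [this]
    · rintro ⟨l, hl⟩
      rw [hf] at hl
      obtain ⟨rfl, h2⟩ := Prod.mk.inj hl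
      obtain ⟨rfl, rfl⟩ := Prod.mk.inj h2
      rw [hκ]
      simp
  · exact h𝒳.prod_mem_s11 hX₀ (h𝒳.fin_mem n)
  · exact ⟨LinearMap.inl R M (K × (Fin n → R)), LinearMap.fst R M (K × (Fin n → R)),
      LinearMap.fst_comp_inl R M (K × (Fin n → R))⟩
  · intro p hp
    by_contra hpM
    exact hfree p (Or.inl hpM) hp
  · rw [Set.eq_empty_iff_forall_notMem]
    rintro p ⟨hp, hpΓ⟩
    exact hfree p (Or.inr (Finset.mem_coe.1 hpΓ)) hp

end
end
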